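/- Let Q₁, Q₂, Q₃ : ℝ³ → ℝ be real quadratic forms with symmetric matrices M₁, M₂, M₃, let f := Q₁Q₃ − Q₂², and assume: (i) fderiv ℝ f P ≠ 0 for every P ∈ ℝ³∖{0} with f(P) = 0; (ii) the binary sextic p(t₀, t₁) := det(t₀²M₁ + 2t₀t₁M₂ + t₁²M₃) is nonzero and squarefree in ℂ[t₀, t₁]. Let ℝP² be the quotient topological space of ℝ³∖{0} by the scaling action of ℝ∖{0}. If the zero locus Z := { [P] ∈ ℝP² : f(P) = 0 } has exactly four connected components (i.e. the real isotopy class of the quartic Δ is four ovals), then the sets { [P] ∈ ℝP² : f(P) < 0 } and { [P] ∈ ℝP² : f(P) ≤ 0 } are connected. (That is, the outside U_Δ of the four ovals is exactly the region where Q₁Q₃ − Q₂² < 0.) -/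

import Mathlib

/-- The scaling relation on nonzero vectors of `ℝⁿ`. -/
def projRel (n : ℕ) (v w : {x : Fin n → ℝ // x ≠ 0}) : Prop :=
  ∃ c : ℝ, c ≠ 0 ∧ c • (v : Fin n → ℝ) = (w : Fin n → ℝ)

/-- The real projective space `ℝPⁿ⁻¹`, as the quotient topological space of `ℝⁿ ∖ {0}` by the
scaling action of `ℝ ∖ {0}`. -/
def RP (n : ℕ) : Type := Quot (projRel n)

instance (n : ℕ) : TopologicalSpace (RP n) :=
  inferInstanceAs (TopologicalSpace (Quot (projRel n)))

open MvPolynomial in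
/-- The binary sextic form `det(t₀²M₁ + 2t₀t₁M₂ + t₁²M₃)`, as a polynomial in `ℂ[t₀, t₁]`. -/
noncomputable def binarySextic (M₁ M₂ M₃ : Matrix (Fin 3) (Fin 3) ℝ) :
    MvPolynomial (Fin 2) ℂ :=
  Matrix.det (Matrix.of fun i j =>
    X 0 ^ 2 * C (M₁ i j : ℂ) + 2 * X 0 * X 1 * C (M₂ i j : ℂ) + X 1 ^ 2 * C (M₃ i j : ℂ))

/-!
With `Q_t = t₁² Q₁ + 2 t₁ t₂ Q₂ + t₂² Q₃`, the region `f ≤ 0` is the union of the quadrics `Q_t = 0`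
for `t` in the projective line.

If no `Q_t` is definite, these quadrics are nonempty and connected and vary continuously, so `f ≤ 0`
is connected.

If some `Q_t` is definite, we may take it to be `Q₁`. The components of `f < 0` then come from the
intervals of parameters `s` for which `Q_(s, 1)` takes negative values; at the left endpoints of
these intervals `Q_(s, 1)` is semidefinite with a kernel vector, and such kernel vectors are
linearly independent. So `f < 0` has at most `n` components in `ℝPⁿ⁻¹`. Suppose that `f ≤ 0` were
disconnected. For `x` and `a` with `f < 0` in different components of `f ≤ 0`, the ray from `x` in
direction `a` first leaves `f < 0` at a point whose component in the zero locus depends only on that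
of `x` in `f < 0`: otherwise some line would meet the quartic in six points, or a chord between two
different ovals would degenerate. Every oval is reached in this way, so there are at most `n` ovals.

Finally `f < 0` is connected when `f ≤ 0` is, since it lies locally on one side of a regular zero.
-/

open Set Filter Topology

section ProjectivelyLocallyConstant

variable {E α : Type*} [NormedAddCommGroup E] [NormedSpace ℝ E] [TopologicalSpace α]

/-- `g` is locally constant on the cone `K` (when its target is discrete) and descends to the image
of `K` in projective space. Working with such functions on `E` replaces working with components of
subsets of projective space. -/
structure IsProjLocConst (g : E → α) (K : Set E) : Prop where
  continuousOn : ContinuousOn g K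
  map_smul : ∀ x ∈ K, ∀ c : ℝ, c ≠ 0 → g (c • x) = g x

/-- The image of the cone `K` in projective space is preconnected, expressed through two-valued
functions on `K`. -/
def IsProjPreconnected (K : Set E) : Prop :=
  ∀ g : E → Bool, IsProjLocConst g K → ∀ x ∈ K, ∀ y ∈ K, g x = g y

theorem IsProjLocConst.mono {g : E → α} {K L : Set E} (hg : IsProjLocConst g L) (hKL : K ⊆ L) :
    IsProjLocConst g K :=
  ⟨hg.continuousOn.mono hKL, fun x hx => hg.map_smul x (hKL hx)⟩

theorem IsProjLocConst.map_neg {g : E → α} {K : Set E} (hg : IsProjLocConst g K) {x : E}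
    (hx : x ∈ K) : g (-x) = g x := by
  simpa only [neg_one_smul] using hg.map_smul x hx (-1) (neg_ne_zero.2 one_ne_zero)

variable [DiscreteTopology α]

theorem IsProjLocConst.eq_of_segment_subset {g : E → α} {K : Set E} (hg : IsProjLocConst g K)
    {x y : E} (h : segment ℝ x y ⊆ K) : g x = g y :=
  (convex_segment x y).isPreconnected.constant (hg.continuousOn.mono h)
    (left_mem_segment ℝ x y) (right_mem_segment ℝ x y)

theorem IsProjLocConst.eventually_eq {g : E → α} {K : Set E} (hg : IsProjLocConst g K) {x : E}
    (hK : K ∈ 𝓝 x) : ∀ᶠ y in 𝓝 x, g y = g x :=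
  (hg.continuousOn.continuousAt hK).eventually ((isOpen_discrete {g x}).mem_nhds rfl)

theorem IsProjLocConst.apply_eq_of_tendsto {g : E → α} {K : Set E} (hg : IsProjLocConst g K)
    {ι : Type*} {l : Filter ι} [l.NeBot] {u : ι → E} {x : E} {b : α} (hu : Tendsto u l (𝓝 x))
    (hK : ∀ i, u i ∈ K) (hx : x ∈ K) (hb : ∀ i, g (u i) = b) : g x = b :=
  tendsto_nhds_unique ((hg.continuousOn x hx).tendsto.comp
    (tendsto_nhdsWithin_iff.2 ⟨hu, .of_forall hK⟩)) (tendsto_const_nhds.congr fun i => (hb i).symm)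

theorem IsProjPreconnected.eq {K : Set E} (hK : IsProjPreconnected K) {g : E → α}
    (hg : IsProjLocConst g K) {x y : E} (hx : x ∈ K) (hy : y ∈ K) : g x = g y := by
  classical
  have hdec : IsProjLocConst (fun u => decide (g u = g y)) K :=
    ⟨continuous_of_discreteTopology (f := fun a => decide (a = g y)) |>.comp_continuousOn
      hg.continuousOn, fun u hu c hc => by rw [hg.map_smul u hu c hc]⟩
  simpa using hK _ hdec x hx y hy

end ProjectivelyLocallyConstant

section RegularZero

variable {E α : Type*} [NormedAddCommGroup E] [NormedSpace ℝ E]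
  {f : E → ℝ} {f' : E →L[ℝ] ℝ} {z v : E}

theorem eventually_lt_of_hasStrictFDerivAt (hf : HasStrictFDerivAt f f' z) (hv : f' v < 0) :
    ∀ᶠ p : E × ℝ in 𝓝 (z, 0), 0 < p.2 → f (p.1 + p.2 • v) < f p.1 := by
  have hlim : Tendsto (fun p : E × ℝ => (p.1 + p.2 • v, p.1)) (𝓝 (z, 0)) (𝓝 (z, z)) := by
    have : Continuous fun p : E × ℝ => (p.1 + p.2 • v, p.1) := by fun_prop
    simpa using this.tendsto (z, 0)
  have hv0 : 0 < ‖v‖ := norm_pos_iff.2 fun h => by simp [h] at hv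
  have hc : 0 < -f' v / (2 * ‖v‖) := div_pos (neg_pos.2 hv) (by positivity)
  filter_upwards [hlim.eventually (hf.isLittleO.def hc)] with p hp hpos
  rw [add_sub_cancel_left, norm_smul, map_smul, Real.norm_of_nonneg hpos.le, smul_eq_mul] at hp
  have hle := (le_abs_self _).trans hp
  have hcv : -f' v / (2 * ‖v‖) * (p.2 * ‖v‖) = -(p.2 * f' v) / 2 := by
    field_simp
  linarith [mul_neg_of_pos_of_neg hpos hv]

theorem exists_apply_neg_of_ne_zero (hf' : f' ≠ 0) : ∃ v, f' v < 0 := by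
  obtain ⟨v, hv⟩ := DFunLike.ne_iff.1 hf'
  rcases lt_or_gt_of_ne hv with h | h
  · exact ⟨v, h⟩
  · exact ⟨-v, by simpa using h⟩

theorem mem_closure_neg_of_hasStrictFDerivAt (hf : HasStrictFDerivAt f f' z) (hf' : f' ≠ 0)
    (hz : f z = 0) : z ∈ closure {x | f x < 0} := by
  obtain ⟨v, hv⟩ := exists_apply_neg_of_ne_zero hf'
  have hpair : Tendsto (fun t : ℝ => (z, t)) (𝓝[>] 0) (𝓝 (z, 0)) :=
    ((Continuous.prodMk_right z).tendsto 0).mono_left nhdsWithin_le_nhds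
  have hlim : Tendsto (fun t : ℝ => z + t • v) (𝓝[>] 0) (𝓝 z) := by
    have : Continuous fun t : ℝ => z + t • v := by fun_prop
    simpa using (this.tendsto 0).mono_left nhdsWithin_le_nhds
  refine mem_closure_of_tendsto hlim ?_
  filter_upwards [hpair.eventually (eventually_lt_of_hasStrictFDerivAt hf hv),
    self_mem_nhdsWithin] with t ht htpos
  exact (ht htpos).trans_eq hz

/-- Near a regular zero, `{f < 0}` lies on one side: every point of it can be pushed along a
direction of decrease to a common neighbourhood. -/
theorem exists_eventually_eq_of_hasStrictFDerivAt [TopologicalSpace α] [DiscreteTopology α]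
    (hf : HasStrictFDerivAt f f' z) (hf' : f' ≠ 0) (hz : f z = 0) (hcont : Continuous f)
    {φ : E → α} (hφ : ContinuousOn φ {x | f x < 0}) :
    ∃ b, ∀ᶠ y in 𝓝 z, f y < 0 → φ y = b := by
  obtain ⟨v, hv⟩ := exists_apply_neg_of_ne_zero hf'
  have hdecr := eventually_lt_of_hasStrictFDerivAt hf hv
  rw [nhds_prod_eq] at hdecr
  obtain ⟨P, hP, R, hR, hPR⟩ := eventually_prod_iff.1 hdecr
  obtain ⟨ε, hε, hRε⟩ := Metric.eventually_nhds_iff.1 hR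
  have hpush : ∀ y, P y → ∀ t : ℝ, 0 < t → t ≤ ε / 2 → f (y + t • v) < f y := fun y hy t ht hle =>
    hPR hy (hRε (by rw [Real.dist_0_eq_abs, abs_of_pos ht]; linarith)) ht
  have hτ : 0 < ε / 2 := half_pos hε
  have hzv : f (z + (ε / 2) • v) < 0 := (hpush z hP.self_of_nhds _ hτ le_rfl).trans_eq hz
  have hopen : IsOpen {x | f x < 0} := isOpen_lt hcont continuous_const
  have hnear : ∀ᶠ y in 𝓝 z, φ (y + (ε / 2) • v) = φ (z + (ε / 2) • v) :=
    (continuous_add_const ((ε / 2) • v)).continuousAt.eventually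
      ((hφ.continuousAt (hopen.mem_nhds hzv)).eventually_mem
        ((isOpen_discrete {φ (z + (ε / 2) • v)}).mem_nhds rfl))
  refine ⟨φ (z + (ε / 2) • v), ?_⟩
  filter_upwards [hP, hnear] with y hPy hy hfy
  rw [← hy]
  have hpath : MapsTo (fun t : ℝ => y + t • v) (Icc 0 (ε / 2)) {x | f x < 0} := by
    intro t ⟨ht, htle⟩
    rcases ht.eq_or_lt with rfl | ht
    · simpa using hfy
    · exact (hpush y hPy t ht htle).trans hfy
  simpa using isPreconnected_Icc.constant (hφ.comp (by fun_prop) hpath)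
    (left_mem_Icc.2 hτ.le) (right_mem_Icc.2 hτ.le)

end RegularZero

section QuadraticForm

variable {E : Type*} [NormedAddCommGroup E] [NormedSpace ℝ E] {Q : QuadraticForm ℝ E} {x y : E}

theorem quadraticForm_smul_add_smul (Q : QuadraticForm ℝ E) (a b : ℝ) (x y : E) :
    Q (a • x + b • y) = a ^ 2 * Q x + a * b * QuadraticMap.polar Q x y + b ^ 2 * Q y := by
  simp only [QuadraticMap.map_add, QuadraticMap.map_smul, QuadraticMap.polar_smul_left,
    QuadraticMap.polar_smul_right, smul_eq_mul]
  ring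

theorem isProjPreconnected_quadraticForm_neg (Q : QuadraticForm ℝ E) :
    IsProjPreconnected {x | Q x < 0} := by
  intro g hg x hx y hy
  wlog hpolar : QuadraticMap.polar Q x y ≤ 0 generalizing y
  · have hy' : -y ∈ {x | Q x < 0} := by simpa using hy
    rw [this (-y) hy' (by rw [QuadraticMap.polar_neg_right]; linarith), hg.map_neg hy]
  refine hg.eq_of_segment_subset ?_
  rintro _ ⟨a, b, ha, hb, hab, rfl⟩
  rw [mem_ofPred_eq, quadraticForm_smul_add_smul]
  have hcross := mul_nonpos_of_nonneg_of_nonpos (mul_nonneg ha hb) hpolar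
  rcases ha.eq_or_lt with rfl | ha
  · obtain rfl : b = 1 := by linarith
    simpa using hy
  · have hx' := mul_neg_of_pos_of_neg (pow_pos ha 2) hx
    have hy' := mul_nonpos_of_nonneg_of_nonpos (sq_nonneg b) hy.le
    linarith

theorem IsProjLocConst.eq_of_polar_eq_zero {g : E → Bool}
    (hg : IsProjLocConst g {x | x ≠ 0 ∧ Q x = 0}) (hx : x ≠ 0 ∧ Q x = 0) (hy : y ≠ 0 ∧ Q y = 0)
    (hxy : QuadraticMap.polar Q x y = 0) : g x = g y := by
  by_cases hdep : ∃ a b : ℝ, 0 ≤ a ∧ 0 ≤ b ∧ a + b = 1 ∧ a • x + b • y = 0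
  · obtain ⟨a, b, -, -, hab, h0⟩ := hdep
    have ha : a ≠ 0 := by
      rintro rfl
      obtain rfl : b = 1 := by linarith
      exact hy.1 (by simpa using h0)
    have hb : b ≠ 0 := by
      rintro rfl
      obtain rfl : a = 1 := by linarith
      exact hx.1 (by simpa using h0)
    have hyx : y = (-(b⁻¹ * a)) • x := by
      rw [neg_smul, mul_smul, eq_neg_of_add_eq_zero_left h0, smul_neg, neg_neg, inv_smul_smul₀ hb]
    rw [hyx, hg.map_smul x hx _ (neg_ne_zero.2 (mul_ne_zero (inv_ne_zero hb) ha))]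
  · refine hg.eq_of_segment_subset ?_
    rintro _ ⟨a, b, ha, hb, hab, rfl⟩
    refine ⟨fun h0 => hdep ⟨a, b, ha, hb, hab, h0⟩, ?_⟩
    simp [quadraticForm_smul_add_smul, hx.2, hy.2, hxy]

theorem exists_ne_zero_polar_eq_zero [FiniteDimensional ℝ E] (hE : 3 ≤ Module.finrank ℝ E)
    (Q : QuadraticForm ℝ E) (x y : E) :
    ∃ k ≠ 0, QuadraticMap.polar Q x k = 0 ∧ QuadraticMap.polar Q y k = 0 := by
  have hker := ((Q.polarBilin x).prod (Q.polarBilin y)).ker_ne_bot_of_finrank_lt (by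
    rw [Module.finrank_prod, Module.finrank_self]; omega)
  obtain ⟨k, hk, hk0⟩ := (Submodule.ne_bot_iff _).1 hker
  exact ⟨k, hk0, by simpa using hk⟩

/-- The arc `a² x + b² y + abc k` with `c² Q k = -polar x y` joins `x` to `y` inside the cone. -/
theorem IsProjLocConst.eq_of_polar_mul_neg {g : E → Bool}
    (hg : IsProjLocConst g {x | x ≠ 0 ∧ Q x = 0}) (hx : x ≠ 0 ∧ Q x = 0) (hy : y ≠ 0 ∧ Q y = 0)
    {k : E} (hxk : QuadraticMap.polar Q x k = 0) (hyk : QuadraticMap.polar Q y k = 0)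
    (hneg : QuadraticMap.polar Q x y * Q k < 0) : g x = g y := by
  have hk : Q k ≠ 0 := right_ne_zero_of_mul hneg.ne
  have hpos : 0 < -(QuadraticMap.polar Q x y * Q k) / Q k ^ 2 := by
    have := neg_pos.2 hneg
    positivity
  obtain ⟨c, hc, hcsq⟩ : ∃ c : ℝ, c ≠ 0 ∧ c ^ 2 * Q k = -QuadraticMap.polar Q x y := by
    refine ⟨√(-(QuadraticMap.polar Q x y * Q k) / Q k ^ 2), (Real.sqrt_pos.2 hpos).ne', ?_⟩
    rw [Real.sq_sqrt hpos.le]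
    field_simp
  let arc : ℝ → E := fun t => (1 - t) ^ 2 • x + t ^ 2 • y + ((1 - t) * t * c) • k
  have harc : MapsTo arc univ {x | x ≠ 0 ∧ Q x = 0} := by
    intro t _
    constructor
    · intro h0
      have hpair : QuadraticMap.polar Q (arc t) k = (1 - t) * t * c * (2 * Q k) := by
        simp [arc, QuadraticMap.polar_add_left, QuadraticMap.polar_smul_left, hxk, hyk,
          QuadraticMap.polar_self]
      rw [h0, QuadraticMap.polar_zero_left, eq_comm] at hpair
      have hends : (1 - t) * t = 0 := by
        by_contra hne
        exact mul_ne_zero (mul_ne_zero hne hc) (mul_ne_zero two_ne_zero hk) hpair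
      rcases mul_eq_zero.1 hends with ht | ht
      · obtain rfl : t = 1 := by linarith
        exact hy.1 (by simpa [arc] using h0)
      · subst ht
        exact hx.1 (by simpa [arc] using h0)
    · simp only [arc]
      rw [QuadraticMap.map_add Q, quadraticForm_smul_add_smul, QuadraticMap.map_smul,
        QuadraticMap.polar_add_left]
      simp only [QuadraticMap.polar_smul_left, QuadraticMap.polar_smul_right, smul_eq_mul, hx.2,
        hy.2, hxk, hyk]
      linear_combination (1 - t) ^ 2 * t ^ 2 * hcsq
  simpa [arc] using isPreconnected_univ.constant
    (hg.continuousOn.comp (by fun_prop : ContinuousOn arc univ) harc) (mem_univ 0) (mem_univ 1)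

theorem isProjPreconnected_quadraticForm_zero [FiniteDimensional ℝ E]
    (hE : 3 ≤ Module.finrank ℝ E) (Q : QuadraticForm ℝ E) :
    IsProjPreconnected {x | x ≠ 0 ∧ Q x = 0} := by
  intro g hg x hx y hy
  by_cases hxy : QuadraticMap.polar Q x y = 0
  · exact hg.eq_of_polar_eq_zero hx hy hxy
  obtain ⟨k, hk0, hxk, hyk⟩ := exists_ne_zero_polar_eq_zero hE Q x y
  by_cases hk : Q k = 0
  · have hky : QuadraticMap.polar Q k y = 0 := by rw [QuadraticMap.polar_comm, hyk]
    exact (hg.eq_of_polar_eq_zero hx ⟨hk0, hk⟩ hxk).trans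
      (hg.eq_of_polar_eq_zero ⟨hk0, hk⟩ hy hky)
  rcases lt_or_gt_of_ne (mul_ne_zero hxy hk) with hneg | hpos
  · exact hg.eq_of_polar_mul_neg hx hy hxk hyk hneg
  · rw [← hg.map_neg hy]
    refine hg.eq_of_polar_mul_neg hx (by simpa using hy) hxk (k := k) ?_ ?_
    · rw [QuadraticMap.polar_neg_left, hyk, neg_zero]
    · rw [QuadraticMap.polar_neg_right]
      linarith

theorem contDiff_quadraticForm [FiniteDimensional ℝ E] (Q : QuadraticForm ℝ E) {n : WithTop ℕ∞} :
    ContDiff ℝ n Q := by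
  have h : ⇑Q = fun x =>
      LinearMap.toContinuousBilinearMap (QuadraticMap.associated (R := ℝ) Q) x x := by
    ext x
    simp [QuadraticMap.associated_eq_self_apply]
  rw [h]
  fun_prop

end QuadraticForm

section Pencil

variable {E α : Type*} [NormedAddCommGroup E] [NormedSpace ℝ E] (Q₁ Q₂ Q₃ : QuadraticForm ℝ E)

/-- The quartic form `Q₁Q₃ - Q₂²`, whose zero locus is the discriminant quartic `Δ`. -/
def discriminantForm (x : E) : ℝ := Q₁ x * Q₃ x - Q₂ x ^ 2

/-- The member `t₁² Q₁ + 2 t₁ t₂ Q₂ + t₂² Q₃` of the family of quadrics with discriminant `Δ`; the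
parameter `t` stands for a point of the projective line. -/
def pencil (t : ℝ × ℝ) : QuadraticForm ℝ E :=
  t.1 ^ 2 • Q₁ + (2 * t.1 * t.2) • Q₂ + t.2 ^ 2 • Q₃

/-- The parameters `t` for which the quadric `pencil Q₁ Q₂ Q₃ t = 0` meets `A`. -/
def pencilParameters (A : Set E) : Set (ℝ × ℝ) := {t | ∃ x ∈ A, pencil Q₁ Q₂ Q₃ t x = 0}

theorem pencil_apply (t : ℝ × ℝ) (x : E) :
    pencil Q₁ Q₂ Q₃ t x = t.1 ^ 2 * Q₁ x + 2 * t.1 * t.2 * Q₂ x + t.2 ^ 2 * Q₃ x := rfl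

variable {Q₁ Q₂ Q₃} {x : E} {t : ℝ × ℝ}

theorem sq_add_sq_pos_of_ne_zero (ht : t ≠ 0) : 0 < t.1 ^ 2 + t.2 ^ 2 := by
  contrapose! ht
  have h₁ : t.1 ^ 2 = 0 := by linarith [sq_nonneg t.1, sq_nonneg t.2]
  have h₂ : t.2 ^ 2 = 0 := by linarith [sq_nonneg t.1, sq_nonneg t.2]
  exact Prod.ext (pow_eq_zero_iff two_ne_zero |>.1 h₁) (pow_eq_zero_iff two_ne_zero |>.1 h₂)

theorem discriminantForm_smul (c : ℝ) (x : E) :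
    discriminantForm Q₁ Q₂ Q₃ (c • x) = c ^ 4 * discriminantForm Q₁ Q₂ Q₃ x := by
  simp only [discriminantForm, QuadraticMap.map_smul, smul_eq_mul]
  ring

theorem discriminantForm_nonpos_of_pencil_eq_zero (ht : t ≠ 0) (h : pencil Q₁ Q₂ Q₃ t x = 0) :
    discriminantForm Q₁ Q₂ Q₃ x ≤ 0 := by
  rw [pencil_apply] at h
  have hsum : (t.1 ^ 2 + t.2 ^ 2) * discriminantForm Q₁ Q₂ Q₃ x =
      -((t.1 * Q₁ x + t.2 * Q₂ x) ^ 2 + (t.1 * Q₂ x + t.2 * Q₃ x) ^ 2) := by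
    unfold discriminantForm
    linear_combination (Q₁ x + Q₃ x) * h
  refine nonpos_of_mul_nonpos_right ?_ (sq_add_sq_pos_of_ne_zero ht)
  rw [hsum]
  exact neg_nonpos.2 (by positivity)

theorem exists_pencil_eq_zero_of_discriminantForm_nonpos (h : discriminantForm Q₁ Q₂ Q₃ x ≤ 0) :
    ∃ t ≠ 0, pencil Q₁ Q₂ Q₃ t x = 0 := by
  by_cases h₁ : Q₁ x = 0
  · exact ⟨(1, 0), by simp, by simp [pencil_apply, h₁]⟩
  · refine ⟨(-Q₂ x + √(Q₂ x ^ 2 - Q₁ x * Q₃ x), Q₁ x), by simp [h₁], ?_⟩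
    have hsq := Real.sq_sqrt (show 0 ≤ Q₂ x ^ 2 - Q₁ x * Q₃ x by
      unfold discriminantForm at h; linarith)
    rw [pencil_apply]
    linear_combination Q₁ x * hsq

variable [FiniteDimensional ℝ E]

theorem continuous_pencil_apply : Continuous fun p : (ℝ × ℝ) × E => pencil Q₁ Q₂ Q₃ p.1 p.2 := by
  have h₁ := (contDiff_quadraticForm Q₁ (n := 0)).continuous
  have h₂ := (contDiff_quadraticForm Q₂ (n := 0)).continuous
  have h₃ := (contDiff_quadraticForm Q₃ (n := 0)).continuous
  simp only [pencil_apply]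
  fun_prop

theorem isClosed_pencilParameters {A : Set E} (hA : IsCompact A) :
    IsClosed (pencilParameters Q₁ Q₂ Q₃ A) := by
  have := isCompact_iff_compactSpace.1 hA
  have hclosed : IsClosed {p : (ℝ × ℝ) × A | pencil Q₁ Q₂ Q₃ p.1 p.2 = 0} :=
    isClosed_eq (continuous_pencil_apply.comp
      (f := fun p : (ℝ × ℝ) × A => (p.1, (p.2 : E))) (by fun_prop)) continuous_const
  have himage : pencilParameters Q₁ Q₂ Q₃ A =
      Prod.fst '' {p : (ℝ × ℝ) × A | pencil Q₁ Q₂ Q₃ p.1 p.2 = 0} := by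
    ext t
    simp [pencilParameters]
  rw [himage]
  exact isClosedMap_fst_of_compactSpace _ hclosed

theorem contDiff_discriminantForm {n : WithTop ℕ∞} : ContDiff ℝ n (discriminantForm Q₁ Q₂ Q₃) :=
  ((contDiff_quadraticForm Q₁).mul (contDiff_quadraticForm Q₃)).sub
    ((contDiff_quadraticForm Q₂).pow 2)

theorem isClosed_pencilParameters_fiber [TopologicalSpace α] [DiscreteTopology α] {g : E → α}
    (hg : IsProjLocConst g {x | x ≠ 0 ∧ discriminantForm Q₁ Q₂ Q₃ x ≤ 0}) (b : α) :
    IsClosed (pencilParameters Q₁ Q₂ Q₃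
      ({x | x ≠ 0 ∧ discriminantForm Q₁ Q₂ Q₃ x ≤ 0} ∩ g ⁻¹' {b})) := by
  set K := {x | x ≠ 0 ∧ discriminantForm Q₁ Q₂ Q₃ x ≤ 0}
  have hsphere : Metric.sphere 0 1 ∩ K =
      Metric.sphere 0 1 ∩ {x | discriminantForm Q₁ Q₂ Q₃ x ≤ 0} := by
    ext x
    exact ⟨fun hx => ⟨hx.1, hx.2.2⟩, fun hx => ⟨hx.1, ne_zero_of_mem_unit_sphere ⟨x, hx.1⟩, hx.2⟩⟩
  have hcompact : IsCompact (Metric.sphere 0 1 ∩ K) := by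
    rw [hsphere]
    exact (isCompact_sphere _ _).inter_right
      (isClosed_le (contDiff_discriminantForm (n := 0)).continuous continuous_const)
  have hnormalize : pencilParameters Q₁ Q₂ Q₃ (K ∩ g ⁻¹' {b}) =
      pencilParameters Q₁ Q₂ Q₃ (Metric.sphere 0 1 ∩ K ∩ g ⁻¹' {b}) := by
    ext t
    refine ⟨fun ⟨x, ⟨hx, hgx⟩, h⟩ => ?_, fun ⟨x, hx, h⟩ => ⟨x, ⟨hx.1.2, hx.2⟩, h⟩⟩
    have hc : ‖x‖⁻¹ ≠ 0 := inv_ne_zero (norm_ne_zero_iff.2 hx.1)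
    refine ⟨‖x‖⁻¹ • x, ⟨⟨by simp [norm_smul, hx.1], smul_ne_zero hc hx.1, ?_⟩,
      (hg.map_smul x hx _ hc).trans hgx⟩, by rw [QuadraticMap.map_smul, h, smul_zero]⟩
    rw [discriminantForm_smul]
    exact mul_nonpos_of_nonneg_of_nonpos (by positivity) hx.2
  rw [hnormalize]
  exact isClosed_pencilParameters (hcompact.of_isClosed_subset
    ((hg.continuousOn.mono inter_subset_right).preimage_isClosed_of_isClosed hcompact.isClosed
      (isClosed_discrete {b})) inter_subset_left)

/-- The closed region is swept out by the quadrics of the pencil, each of which is connected, and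
two closed sets of parameters covering the projective line must meet. -/
theorem isProjPreconnected_discriminantForm_nonpos (hE : 3 ≤ Module.finrank ℝ E)
    (hiso : ∀ t ≠ 0, ¬(pencil Q₁ Q₂ Q₃ t).Anisotropic) :
    IsProjPreconnected {x | x ≠ 0 ∧ discriminantForm Q₁ Q₂ Q₃ x ≤ 0} := by
  intro g hg x hx y hy
  by_contra hne
  let T (b : Bool) : Set (ℝ × ℝ) := pencilParameters Q₁ Q₂ Q₃
    ({x | x ≠ 0 ∧ discriminantForm Q₁ Q₂ Q₃ x ≤ 0} ∩ g ⁻¹' {b})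
  have hmem : ∀ t ≠ 0, ∀ u ≠ 0, pencil Q₁ Q₂ Q₃ t u = 0 → t ∈ T (g u) := fun t ht u hu h =>
    ⟨u, ⟨⟨hu, discriminantForm_nonpos_of_pencil_eq_zero ht h⟩, rfl⟩, h⟩
  have hmeets : ∀ u, u ≠ 0 ∧ discriminantForm Q₁ Q₂ Q₃ u ≤ 0 → ({0}ᶜ ∩ T (g u)).Nonempty := by
    intro u hu
    obtain ⟨t, ht, h⟩ := exists_pencil_eq_zero_of_discriminantForm_nonpos hu.2
    exact ⟨t, ht, hmem t ht u hu.1 h⟩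
  have hcover : {0}ᶜ ⊆ T (g x) ∪ T (g y) := by
    intro t ht
    obtain ⟨u, h, hu⟩ : ∃ u, pencil Q₁ Q₂ Q₃ t u = 0 ∧ u ≠ 0 := by
      simpa [QuadraticMap.Anisotropic] using hiso t ht
    have hu' := hmem t ht u hu h
    rcases (by decide +revert : ∀ a b c : Bool, b ≠ c → a = b ∨ a = c) (g u) (g x) (g y) hne with
      hgu | hgu
    · exact Or.inl (hgu ▸ hu')
    · exact Or.inr (hgu ▸ hu')
  have hline : IsConnected ({0}ᶜ : Set (ℝ × ℝ)) :=
    isConnected_compl_singleton_of_one_lt_rank (by simp [one_add_one_eq_two]) 0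
  obtain ⟨t, ht, ⟨u, ⟨hu, hgu⟩, hut⟩, v, ⟨hv, hgv⟩, hvt⟩ :=
    isPreconnected_closed_iff.1 hline.isPreconnected _ _ (isClosed_pencilParameters_fiber hg (g x))
      (isClosed_pencilParameters_fiber hg (g y)) hcover (hmeets x hx) (hmeets y hy)
  have hquadric : g u = g v := isProjPreconnected_quadraticForm_zero hE (pencil Q₁ Q₂ Q₃ t) g
    (hg.mono fun w hw => ⟨hw.1, discriminantForm_nonpos_of_pencil_eq_zero ht hw.2⟩)
    u ⟨hu.1, hut⟩ v ⟨hv.1, hvt⟩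
  exact hne (hgu.symm.trans (hquadric.trans hgv))

end Pencil

section SmoothQuartic

variable {E α : Type*} [NormedAddCommGroup E] [NormedSpace ℝ E]

/-- `f` is a quartic form all of whose real zeros are regular. Being a quartic form is encoded as
homogeneity of degree four together with being a polynomial of degree at most four along lines. -/
structure IsSmoothQuartic (f : E → ℝ) : Prop where
  contDiff : ContDiff ℝ 1 f
  map_smul : ∀ (c : ℝ) (x : E), f (c • x) = c ^ 4 * f x
  exists_polynomial : ∀ x a : E, ∃ p : Polynomial ℝ, p.natDegree ≤ 4 ∧
    ∀ t : ℝ, p.eval t = f (x + t • a)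
  fderiv_ne_zero : ∀ x ≠ 0, f x = 0 → fderiv ℝ f x ≠ 0

namespace IsSmoothQuartic

variable {f : E → ℝ} {x z : E} [TopologicalSpace α]

theorem ne_zero_of_neg (hf : IsSmoothQuartic f) (hx : f x < 0) : x ≠ 0 := by
  rintro rfl
  simpa [hx.ne] using hf.map_smul 0 0

theorem mem_nonpos_of_neg (hf : IsSmoothQuartic f) (hx : f x < 0) : x ∈ {x | x ≠ 0 ∧ f x ≤ 0} :=
  ⟨hf.ne_zero_of_neg hx, hx.le⟩

theorem map_neg (hf : IsSmoothQuartic f) (x : E) : f (-x) = f x := by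
  rw [← neg_one_smul ℝ, hf.map_smul, Even.neg_one_pow (by decide), one_mul]

theorem map_smul_neg (hf : IsSmoothQuartic f) {c : ℝ} (hc : c ≠ 0) (hx : f x < 0) :
    f (c • x) < 0 := by
  rw [hf.map_smul]
  exact mul_neg_of_pos_of_neg (by positivity) hx

theorem isOpen_neg (hf : IsSmoothQuartic f) : IsOpen {x | f x < 0} :=
  isOpen_lt hf.contDiff.continuous continuous_const

theorem hasStrictFDerivAt (hf : IsSmoothQuartic f) (z : E) :
    HasStrictFDerivAt f (fderiv ℝ f z) z :=
  hf.contDiff.contDiffAt.hasStrictFDerivAt one_ne_zero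

theorem subset_closure_neg (hf : IsSmoothQuartic f) :
    {x | x ≠ 0 ∧ f x ≤ 0} ⊆ closure {x | f x < 0} := by
  rintro z ⟨hz, hfz⟩
  rcases hfz.lt_or_eq with hneg | hzero
  · exact subset_closure hneg
  · exact mem_closure_neg_of_hasStrictFDerivAt (hf.hasStrictFDerivAt z)
      (hf.fderiv_ne_zero z hz hzero) hzero

theorem exists_neg_apply_eq [DiscreteTopology α] (hf : IsSmoothQuartic f) {φ : E → α}
    (hφ : ContinuousOn φ {x | x ≠ 0 ∧ f x ≤ 0}) (hx : x ∈ {x | x ≠ 0 ∧ f x ≤ 0}) :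
    ∃ y, f y < 0 ∧ φ y = φ x := by
  have := mem_closure_iff_nhdsWithin_neBot.1 (hf.subset_closure_neg hx)
  have hlim : Tendsto φ (𝓝[{x | f x < 0}] x) (𝓝 (φ x)) :=
    (hφ x hx).mono fun _ => hf.mem_nonpos_of_neg
  exact (eventually_mem_nhdsWithin.and
    (hlim.eventually ((isOpen_discrete {φ x}).mem_nhds rfl))).exists

theorem exists_eventually_eq [DiscreteTopology α] (hf : IsSmoothQuartic f) {φ : E → α}
    (hφ : ContinuousOn φ {x | f x < 0}) (hz : z ≠ 0) (hfz : f z = 0) :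
    ∃ b, ∀ᶠ y in 𝓝 z, f y < 0 → φ y = b :=
  exists_eventually_eq_of_hasStrictFDerivAt (hf.hasStrictFDerivAt z) (hf.fderiv_ne_zero z hz hfz)
    hfz hf.contDiff.continuous hφ

theorem exists_tendsto_nhdsWithin_neg [DiscreteTopology α] (hf : IsSmoothQuartic f) {φ : E → α}
    (hφ : ContinuousOn φ {x | f x < 0}) (hz : z ≠ 0) (hfz : f z ≤ 0) :
    ∃ b, Tendsto φ (𝓝[{x | f x < 0}] z) (𝓝 b) := by
  rcases hfz.lt_or_eq with hneg | hzero
  · exact ⟨φ z, hφ z hneg⟩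
  · obtain ⟨b, hb⟩ := hf.exists_eventually_eq hφ hz hzero
    exact ⟨b, tendsto_nhds_of_eventually_eq (eventually_nhdsWithin_iff.2 hb)⟩

theorem isProjLocConst_extendFrom [DiscreteTopology α] (hf : IsSmoothQuartic f) {φ : E → α}
    (hφ : IsProjLocConst φ {x | f x < 0}) :
    IsProjLocConst (extendFrom {x | f x < 0} φ) {x | x ≠ 0 ∧ f x ≤ 0} where
  continuousOn := continuousOn_extendFrom hf.subset_closure_neg
    fun _ hx => hf.exists_tendsto_nhdsWithin_neg hφ.continuousOn hx.1 hx.2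
  map_smul := by
    intro x hx c hc
    have hcx : f (c • x) ≤ 0 := by
      rw [hf.map_smul]
      exact mul_nonpos_of_nonneg_of_nonpos (by positivity) hx.2
    have hlim := tendsto_extendFrom
      (hf.exists_tendsto_nhdsWithin_neg hφ.continuousOn (smul_ne_zero hc hx.1) hcx)
    have hscale : Tendsto (c • ·) (𝓝[{x | f x < 0}] x) (𝓝[{x | f x < 0}] (c • x)) :=
      (continuous_const_smul c).continuousWithinAt.tendsto_nhdsWithin
        fun _ hy => hf.map_smul_neg hc hy
    refine (extendFrom_eq (hf.subset_closure_neg hx) ((hlim.comp hscale).congr' ?_)).symm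
    filter_upwards [self_mem_nhdsWithin] with y hy
    exact hφ.map_smul y hy c hc

theorem isProjPreconnected_neg (hf : IsSmoothQuartic f)
    (h : IsProjPreconnected {x | x ≠ 0 ∧ f x ≤ 0}) : IsProjPreconnected {x | f x < 0} := by
  intro φ hφ x hx y hy
  have hext : ∀ z, f z < 0 → extendFrom {x | f x < 0} φ z = φ z := fun z hz =>
    extendFrom_eq (subset_closure hz) (hφ.continuousOn z hz)
  rw [← hext x hx, ← hext y hy]
  exact h _ (hf.isProjLocConst_extendFrom hφ) x (hf.mem_nonpos_of_neg hx)
    y (hf.mem_nonpos_of_neg hy)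

end IsSmoothQuartic

end SmoothQuartic

section RealLine

variable {α : Type*} [TopologicalSpace α] [DiscreteTopology α]

theorem encard_image_le_encard_leftEndpoints {S : Set ℝ} (hS : IsOpen S)
    (hleft : ∀ s ∈ S, ∃ u ≤ s, u ∉ S) {H : ℝ → α} (hH : ContinuousOn H S) :
    (H '' S).encard ≤ {a | a ∉ S ∧ ∃ᶠ s in 𝓝[>] a, s ∈ S}.encard := by
  let left : ℝ → ℝ := fun s => sSup (Iic s ∩ Sᶜ)
  have hbdd : ∀ s, BddAbove (Iic s ∩ Sᶜ) := fun s => bddAbove_Iic.mono inter_subset_left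
  have hmem : ∀ s ∈ S, left s ∈ Iic s ∩ Sᶜ := fun s hs =>
    (isClosed_Iic.inter hS.isClosed_compl).csSup_mem (hleft s hs) (hbdd s)
  have hlt : ∀ s ∈ S, left s < s := fun s hs =>
    (hmem s hs).1.lt_of_ne fun h => (hmem s hs).2 (by rwa [h])
  have hIoc : ∀ s, Ioc (left s) s ⊆ S := fun s u hu => by
    by_contra hu'
    exact hu.1.not_ge (le_csSup (hbdd s) ⟨hu.2, hu'⟩)
  have hconst : ∀ s ∈ S, ∀ u ∈ S, left s = left u → H s = H u := by
    intro s hs u hu h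
    wlog hsu : s ≤ u generalizing s u
    · exact (this u hu s hs h.symm (le_of_not_ge hsu)).symm
    exact isPreconnected_Ioc.constant (hH.mono (hIoc u)) ⟨h ▸ hlt s hs, hsu⟩ ⟨hlt u hu, le_rfl⟩
  have hsub : H '' S ⊆ (H ∘ Function.invFunOn left S) '' {a | a ∉ S ∧ ∃ᶠ s in 𝓝[>] a, s ∈ S} := by
    rintro _ ⟨s, hs, rfl⟩
    refine ⟨left s, ⟨(hmem s hs).2, Eventually.frequently ?_⟩, ?_⟩
    · filter_upwards [Ioc_mem_nhdsGT (hlt s hs)] with u hu using hIoc s hu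
    · exact hconst _ (Function.invFunOn_mem ⟨s, hs, rfl⟩) s hs
        (Function.invFunOn_eq (f := left) ⟨s, hs, rfl⟩)
  exact (encard_le_encard hsub).trans (encard_image_le _ _)

end RealLine

section DefinitePencil

variable {E : Type*} [NormedAddCommGroup E] [NormedSpace ℝ E] {Q₁ Q₂ Q₃ : QuadraticForm ℝ E}

theorem polar_eq_zero_of_nonneg {Q : QuadraticForm ℝ E} (hQ : ∀ x, 0 ≤ Q x) {k : E} (hk : Q k = 0)
    (v : E) : QuadraticMap.polar Q k v = 0 := by
  have h := hQ ((Q v + 1) • k + (-QuadraticMap.polar Q k v) • v)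
  rw [quadraticForm_smul_add_smul, hk] at h
  have hsq : QuadraticMap.polar Q k v ^ 2 ≤ 0 := by linarith
  exact pow_eq_zero_iff two_ne_zero |>.1 (hsq.antisymm (sq_nonneg _))

theorem polar_pencil (t : ℝ × ℝ) (x y : E) :
    QuadraticMap.polar (pencil Q₁ Q₂ Q₃ t) x y = t.1 ^ 2 * QuadraticMap.polar Q₁ x y +
      2 * t.1 * t.2 * QuadraticMap.polar Q₂ x y + t.2 ^ 2 * QuadraticMap.polar Q₃ x y := by
  simp only [QuadraticMap.polar, pencil_apply]
  ring

/-- The hypotheses say that the vectors `(kᵢ, aᵢ kᵢ)` are orthogonal and negative for the form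
`2 B (u, v) + C (u, u)` in `(u, v)`, which vanishes on `u = 0`. -/
theorem linearIndependent_of_twisted_orthogonal {V ι : Type*} [AddCommGroup V] [Module ℝ V]
    (B C : LinearMap.BilinForm ℝ V) {a : ι → ℝ} {k : ι → V}
    (hoff : ∀ i j, i ≠ j → (a i + a j) * B (k i) (k j) + C (k i) (k j) = 0)
    (hdiag : ∀ i, (a i + a i) * B (k i) (k i) + C (k i) (k i) < 0) : LinearIndependent ℝ k := by
  let m : ι → ι → ℝ := fun i j => (a i + a j) * B (k i) (k j) + C (k i) (k j)
  rw [linearIndependent_iff']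
  intro s c hc i hi
  have hcol : ∀ j, ∑ i ∈ s, c i * m i j = B (∑ i ∈ s, (c i * a i) • k i) (k j) := by
    intro j
    have hB : B (∑ i ∈ s, c i • k i) (k j) = 0 := by rw [hc, map_zero, LinearMap.zero_apply]
    have hC : C (∑ i ∈ s, c i • k i) (k j) = 0 := by rw [hc, map_zero, LinearMap.zero_apply]
    simp only [map_sum, LinearMap.sum_apply, map_smul, LinearMap.smul_apply, smul_eq_mul]
      at hB hC ⊢
    have hsplit : ∑ i ∈ s, c i * m i j = ∑ i ∈ s, c i * a i * B (k i) (k j) +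
        a j * ∑ i ∈ s, c i * B (k i) (k j) + ∑ i ∈ s, c i * C (k i) (k j) := by
      simp only [Finset.mul_sum, ← Finset.sum_add_distrib, m]
      exact Finset.sum_congr rfl fun i _ => by ring
    rw [hsplit, hB, hC, mul_zero, add_zero, add_zero]
  have htotal : ∑ j ∈ s, c j ^ 2 * m j j = 0 := by
    calc ∑ j ∈ s, c j ^ 2 * m j j = ∑ j ∈ s, c j * ∑ i ∈ s, c i * m i j := by
          refine Finset.sum_congr rfl fun j hj => ?_
          rw [Finset.sum_eq_single_of_mem j hj fun i _ hij => by
            rw [show m i j = 0 from hoff i j hij, mul_zero]]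
          ring
      _ = B (∑ i ∈ s, (c i * a i) • k i) (∑ j ∈ s, c j • k j) := by
          simp only [hcol, map_sum (B _), map_smul, smul_eq_mul]
      _ = 0 := by rw [hc, map_zero]
  have hterm := (Finset.sum_eq_zero_iff_of_nonpos fun j _ =>
    mul_nonpos_of_nonneg_of_nonpos (sq_nonneg (c j)) (hdiag j).le).1 htotal i hi
  simpa [(hdiag i).ne, m] using hterm

theorem linearIndependent_of_polar_pencil_eq_zero {ι : Type*} {a : ι → ℝ}
    (ha : Function.Injective a) {k : ι → E}
    (hker : ∀ i v, QuadraticMap.polar (pencil Q₁ Q₂ Q₃ (a i, 1)) (k i) v = 0)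
    (hneg : ∀ i, a i * Q₁ (k i) + Q₂ (k i) < 0) : LinearIndependent ℝ k := by
  refine linearIndependent_of_twisted_orthogonal (a := a) Q₁.polarBilin ((2 : ℝ) • Q₂.polarBilin)
    (fun i j hij => ?_) (fun i => ?_)
  · have hi := hker i (k j)
    have hj := hker j (k i)
    rw [QuadraticMap.polar_comm] at hj
    rw [polar_pencil] at hi hj
    refine mul_left_cancel₀ (sub_ne_zero.2 (ha.ne hij)) ?_
    simp only [LinearMap.smul_apply, QuadraticMap.polarBilin_apply_apply, smul_eq_mul]
    linear_combination hi - hj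
  · simp only [LinearMap.smul_apply, QuadraticMap.polarBilin_apply_apply, QuadraticMap.polar_self,
      smul_eq_mul, nsmul_eq_mul, Nat.cast_ofNat]
    linarith [hneg i]

end DefinitePencil

section Discriminant

variable {E : Type*} [NormedAddCommGroup E] [NormedSpace ℝ E]
  {Q₁ Q₂ Q₃ : QuadraticForm ℝ E}

theorem exists_polynomial_quadraticForm (Q : QuadraticForm ℝ E) (x a : E) :
    ∃ p : Polynomial ℝ, p.natDegree ≤ 2 ∧ ∀ t : ℝ, p.eval t = Q (x + t • a) := by
  refine ⟨Polynomial.C (Q a) * Polynomial.X ^ 2 +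
    Polynomial.C (QuadraticMap.polar Q x a) * Polynomial.X + Polynomial.C (Q x),
    Polynomial.natDegree_quadratic_le, fun t => ?_⟩
  have h := quadraticForm_smul_add_smul Q 1 t x a
  rw [one_smul] at h
  rw [h]
  simp only [Polynomial.eval_add, Polynomial.eval_mul, Polynomial.eval_C, Polynomial.eval_pow,
    Polynomial.eval_X]
  ring

variable [FiniteDimensional ℝ E]

theorem fderiv_discriminantForm_apply (x v : E) :
    fderiv ℝ (discriminantForm Q₁ Q₂ Q₃) x v = QuadraticMap.polar Q₁ x v * Q₃ x +
      Q₁ x * QuadraticMap.polar Q₃ x v - 2 * Q₂ x * QuadraticMap.polar Q₂ x v := by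
  have hdiff : DifferentiableAt ℝ (discriminantForm Q₁ Q₂ Q₃) x :=
    (contDiff_discriminantForm (n := 1)).differentiable one_ne_zero x
  have hline : HasDerivAt (fun t : ℝ => discriminantForm Q₁ Q₂ Q₃ (x + t • v)) _ 0 :=
    ((Q₁.hasLineDerivAt x v).mul (Q₃.hasLineDerivAt x v)).sub ((Q₂.hasLineDerivAt x v).pow 2)
  rw [(hdiff.hasFDerivAt.hasLineDerivAt v).unique hline]
  simp

theorem isSmoothQuartic_discriminantForm
    (hreg : ∀ x ≠ 0, discriminantForm Q₁ Q₂ Q₃ x = 0 →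
      fderiv ℝ (discriminantForm Q₁ Q₂ Q₃) x ≠ 0) :
    IsSmoothQuartic (discriminantForm Q₁ Q₂ Q₃) where
  contDiff := contDiff_discriminantForm
  map_smul := discriminantForm_smul
  exists_polynomial x a := by
    obtain ⟨p₁, hd₁, h₁⟩ := exists_polynomial_quadraticForm Q₁ x a
    obtain ⟨p₂, hd₂, h₂⟩ := exists_polynomial_quadraticForm Q₂ x a
    obtain ⟨p₃, hd₃, h₃⟩ := exists_polynomial_quadraticForm Q₃ x a
    refine ⟨p₁ * p₃ - p₂ ^ 2, ?_, fun t => by simp [discriminantForm, h₁, h₂, h₃]⟩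
    exact Polynomial.natDegree_sub_le_of_le (Polynomial.natDegree_mul_le_of_le hd₁ hd₃)
      (Polynomial.natDegree_pow_le_of_le 2 hd₂)
  fderiv_ne_zero := hreg

end Discriminant

section LeftEndpoints

variable {E : Type*} [NormedAddCommGroup E] [NormedSpace ℝ E] {Q₁ Q₂ Q₃ : QuadraticForm ℝ E}
  {a : ℝ} {k x : E}

theorem discriminantForm_neg_of_pencil_neg (h₁ : 0 < Q₁ x) {s : ℝ}
    (h : pencil Q₁ Q₂ Q₃ (s, 1) x < 0) : discriminantForm Q₁ Q₂ Q₃ x < 0 := by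
  rw [pencil_apply] at h
  unfold discriminantForm
  nlinarith [mul_neg_of_pos_of_neg h₁ h, sq_nonneg (s * Q₁ x + Q₂ x)]

theorem exists_pencil_neg_of_discriminantForm_neg (h₁ : 0 < Q₁ x)
    (h : discriminantForm Q₁ Q₂ Q₃ x < 0) : ∃ s, pencil Q₁ Q₂ Q₃ (s, 1) x < 0 := by
  refine ⟨-Q₂ x / Q₁ x, ?_⟩
  have hval : pencil Q₁ Q₂ Q₃ (-Q₂ x / Q₁ x, 1) x = discriminantForm Q₁ Q₂ Q₃ x / Q₁ x := by
    rw [pencil_apply, discriminantForm]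
    field_simp
    ring
  rw [hval]
  exact div_neg_of_neg_of_pos h h₁

variable [FiniteDimensional ℝ E]

/-- If equality held, the gradient of the discriminant at `k` would be a multiple of that of the
quadric of parameter `a`, which is singular at `k`. -/
theorem mul_add_ne_zero_of_isSmoothQuartic (hf : IsSmoothQuartic (discriminantForm Q₁ Q₂ Q₃))
    (hk : k ≠ 0) (hnonneg : ∀ x, 0 ≤ pencil Q₁ Q₂ Q₃ (a, 1) x)
    (hzero : pencil Q₁ Q₂ Q₃ (a, 1) k = 0) : a * Q₁ k + Q₂ k ≠ 0 := by
  intro h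
  have h₂ : Q₂ k = -(a * Q₁ k) := by linarith
  have h₃ : Q₃ k = a ^ 2 * Q₁ k := by
    rw [pencil_apply] at hzero
    linear_combination hzero - 2 * a * h
  refine hf.fderiv_ne_zero k hk ?_ ?_
  · rw [discriminantForm, h₂, h₃]
    ring
  · ext v
    have hpolar := polar_eq_zero_of_nonneg hnonneg hzero v
    rw [polar_pencil] at hpolar
    rw [fderiv_discriminantForm_apply, h₂, h₃, zero_apply]
    linear_combination Q₁ k * hpolar

theorem eventually_forall_mem_sphere_pencil_pos_or
    (hpos : ∀ x ≠ 0, 0 < pencil Q₁ Q₂ Q₃ (a, 1) x ∨ 0 < a * Q₁ x + Q₂ x) :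
    ∀ᶠ s in 𝓝 a, ∀ x ∈ Metric.sphere (0 : E) 1,
      0 < pencil Q₁ Q₂ Q₃ (s, 1) x ∨ 0 < (s + a) * Q₁ x + 2 * Q₂ x := by
  have hc₁ := (contDiff_quadraticForm Q₁ (n := 0)).continuous
  have hc₂ := (contDiff_quadraticForm Q₂ (n := 0)).continuous
  have hpencil : Continuous fun p : ℝ × E => pencil Q₁ Q₂ Q₃ (p.1, 1) p.2 :=
    continuous_pencil_apply.comp (f := fun p : ℝ × E => ((p.1, 1), p.2)) (by fun_prop)
  have hslope : Continuous fun p : ℝ × E => (p.1 + a) * Q₁ p.2 + 2 * Q₂ p.2 := by fun_prop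
  refine (isCompact_sphere 0 1).eventually_forall_of_forall_eventually fun x hx => ?_
  rcases hpos x (ne_zero_of_mem_unit_sphere ⟨x, hx⟩) with h | h
  · exact ((hpencil.tendsto (a, x)).eventually_const_lt h).mono fun _ => Or.inl
  · have h' : 0 < (a + a) * Q₁ x + 2 * Q₂ x := by linarith
    exact ((hslope.tendsto (a, x)).eventually_const_lt h').mono fun _ => Or.inr

theorem exists_pencil_eq_zero_of_frequently (hnonneg : ∀ x, 0 ≤ pencil Q₁ Q₂ Q₃ (a, 1) x)
    (hfreq : ∃ᶠ s in 𝓝[>] a, ∃ x, pencil Q₁ Q₂ Q₃ (s, 1) x < 0) :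
    ∃ k ≠ 0, pencil Q₁ Q₂ Q₃ (a, 1) k = 0 ∧ a * Q₁ k + Q₂ k ≤ 0 := by
  by_contra! hcon
  have hcompact := eventually_forall_mem_sphere_pencil_pos_or fun x hx =>
    (hnonneg x).lt_or_eq.imp_right fun h => hcon x hx h.symm
  obtain ⟨s, ⟨x, hx⟩, hs, has⟩ :=
    (hfreq.and_eventually ((hcompact.filter_mono nhdsWithin_le_nhds).and
      self_mem_nhdsWithin)).exists
  have hx0 : x ≠ 0 := by
    rintro rfl
    simp at hx
  have hnorm : 0 < ‖x‖⁻¹ := inv_pos.2 (norm_pos_iff.2 hx0)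
  have hunit : pencil Q₁ Q₂ Q₃ (s, 1) (‖x‖⁻¹ • x) < 0 := by
    rw [QuadraticMap.map_smul, smul_eq_mul]
    exact mul_neg_of_pos_of_neg (mul_pos hnorm hnorm) hx
  have hdiff : pencil Q₁ Q₂ Q₃ (s, 1) (‖x‖⁻¹ • x) = pencil Q₁ Q₂ Q₃ (a, 1) (‖x‖⁻¹ • x) +
      (s - a) * ((s + a) * Q₁ (‖x‖⁻¹ • x) + 2 * Q₂ (‖x‖⁻¹ • x)) := by
    simp only [pencil_apply]
    ring
  rcases hs (‖x‖⁻¹ • x) (by simp [norm_smul, hx0]) with hpos | hpos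
  · exact hpos.not_gt hunit
  · linarith [hnonneg (‖x‖⁻¹ • x), mul_pos (sub_pos.2 has) hpos]

end LeftEndpoints

section DefinitePencilBound

variable {E α : Type*} [NormedAddCommGroup E] [NormedSpace ℝ E] [FiniteDimensional ℝ E]
  [TopologicalSpace α] [DiscreteTopology α] {Q₁ Q₂ Q₃ : QuadraticForm ℝ E}

theorem exists_forall_abs_le_mul (hQ₁ : Q₁.PosDef) (Q : QuadraticForm ℝ E) :
    ∃ C, ∀ x, |Q x| ≤ C * Q₁ x := by
  have hsphere : ∀ x ∈ Metric.sphere (0 : E) 1, 0 < Q₁ x := fun x hx =>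
    hQ₁ x (ne_zero_of_mem_unit_sphere ⟨x, hx⟩)
  obtain ⟨C, hC⟩ := (isCompact_sphere (0 : E) 1).exists_bound_of_continuousOn
    (f := fun x => Q x / Q₁ x)
    ((contDiff_quadraticForm Q (n := 0)).continuous.continuousOn.div
      (contDiff_quadraticForm Q₁ (n := 0)).continuous.continuousOn fun x hx => (hsphere x hx).ne')
  refine ⟨C, fun x => ?_⟩
  by_cases hx : x = 0
  · simp [hx]
  have hunit : ‖x‖⁻¹ • x ∈ Metric.sphere (0 : E) 1 := by simp [norm_smul, hx]
  have hratio : Q (‖x‖⁻¹ • x) / Q₁ (‖x‖⁻¹ • x) = Q x / Q₁ x := by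
    simp only [QuadraticMap.map_smul, smul_eq_mul]
    exact mul_div_mul_left _ _ (mul_self_ne_zero.2 (inv_ne_zero (norm_ne_zero_iff.2 hx)))
  have h := hC _ hunit
  rwa [hratio, Real.norm_eq_abs, abs_div, abs_of_pos (hQ₁ x hx), div_le_iff₀ (hQ₁ x hx)] at h

theorem exists_forall_le_pencil_nonneg (hQ₁ : Q₁.PosDef) :
    ∃ m, ∀ s ≤ m, ∀ x, 0 ≤ pencil Q₁ Q₂ Q₃ (s, 1) x := by
  obtain ⟨C₂, hC₂⟩ := exists_forall_abs_le_mul hQ₁ Q₂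
  obtain ⟨C₃, hC₃⟩ := exists_forall_abs_le_mul hQ₁ Q₃
  refine ⟨-(2 * |C₂| + |C₃| + 1), fun s hs x => ?_⟩
  have hx : 0 ≤ Q₁ x := hQ₁.nonneg x
  have h₂ : Q₂ x ≤ |C₂| * Q₁ x :=
    (le_abs_self _).trans ((hC₂ x).trans (mul_le_mul_of_nonneg_right (le_abs_self _) hx))
  have h₃ : -(|C₃| * Q₁ x) ≤ Q₃ x :=
    neg_le.1 ((neg_le_abs _).trans
      ((hC₃ x).trans (mul_le_mul_of_nonneg_right (le_abs_self _) hx)))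
  have hcoeff : 0 ≤ s ^ 2 + 2 * s * |C₂| - |C₃| := by
    nlinarith [abs_nonneg C₂, abs_nonneg C₃]
  have hs0 : s ≤ 0 := by linarith [abs_nonneg C₂, abs_nonneg C₃]
  rw [pencil_apply]
  linarith [mul_nonneg hcoeff hx, mul_le_mul_of_nonpos_left h₂ hs0]

theorem encard_leftEndpoints_le_finrank (hf : IsSmoothQuartic (discriminantForm Q₁ Q₂ Q₃)) :
    {a | a ∉ {s | ∃ x, pencil Q₁ Q₂ Q₃ (s, 1) x < 0} ∧
      ∃ᶠ s in 𝓝[>] a, s ∈ {s | ∃ x, pencil Q₁ Q₂ Q₃ (s, 1) x < 0}}.encard ≤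
      Module.finrank ℝ E := by
  set L := {a | a ∉ {s | ∃ x, pencil Q₁ Q₂ Q₃ (s, 1) x < 0} ∧
    ∃ᶠ s in 𝓝[>] a, s ∈ {s | ∃ x, pencil Q₁ Q₂ Q₃ (s, 1) x < 0}}
  have hnonneg : ∀ a ∈ L, ∀ x, 0 ≤ pencil Q₁ Q₂ Q₃ (a, 1) x := fun a ha x =>
    not_lt.1 fun h => ha.1 ⟨x, h⟩
  choose! k hk0 hkzero hkle using fun a ha =>
    exists_pencil_eq_zero_of_frequently (hnonneg a ha) ha.2
  have hindep : LinearIndepOn ℝ k L :=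
    linearIndependent_of_polar_pencil_eq_zero Subtype.val_injective
      (fun a => polar_eq_zero_of_nonneg (hnonneg a a.2) (hkzero a a.2))
      fun a => (hkle a a.2).lt_of_ne
        (mul_add_ne_zero_of_isSmoothQuartic hf (hk0 a a.2) (hnonneg a a.2) (hkzero a a.2))
  simpa [← Module.finrank_eq_rank] using hindep.encard_le_toENat_rank

theorem eventually_pencil_neg {s : ℝ} {x : E} (hx : pencil Q₁ Q₂ Q₃ (s, 1) x < 0) :
    ∀ᶠ u in 𝓝 s, pencil Q₁ Q₂ Q₃ (u, 1) x < 0 := by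
  have hcont : Continuous fun u : ℝ => pencil Q₁ Q₂ Q₃ (u, 1) x :=
    continuous_pencil_apply.comp (f := fun u : ℝ => ((u, 1), x)) (by fun_prop)
  exact (hcont.tendsto s).eventually_lt_const hx

/-- Each component of the negative region comes from an interval of parameters `s` for which
`pencil (s, 1)` takes negative values, and such intervals have left endpoints. -/
theorem encard_image_le_finrank_of_posDef (hQ₁ : Q₁.PosDef)
    (hf : IsSmoothQuartic (discriminantForm Q₁ Q₂ Q₃)) {h : E → α}
    (hh : IsProjLocConst h {x | discriminantForm Q₁ Q₂ Q₃ x < 0}) :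
    (h '' {x | discriminantForm Q₁ Q₂ Q₃ x < 0}).encard ≤ Module.finrank ℝ E := by
  let S : Set ℝ := {s | ∃ x, pencil Q₁ Q₂ Q₃ (s, 1) x < 0}
  have hsub : ∀ s, {x | pencil Q₁ Q₂ Q₃ (s, 1) x < 0} ⊆
      {x | discriminantForm Q₁ Q₂ Q₃ x < 0} := fun s x hx =>
    discriminantForm_neg_of_pencil_neg (hQ₁ x fun h0 => by simp [h0] at hx) hx
  have hS : IsOpen S := isOpen_iff_mem_nhds.2 fun _ ⟨x, hx⟩ =>
    (eventually_pencil_neg hx).mono fun _ hu => ⟨x, hu⟩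
  obtain ⟨m, hm⟩ := exists_forall_le_pencil_nonneg (Q₂ := Q₂) (Q₃ := Q₃) hQ₁
  have hleft : ∀ s ∈ S, ∃ u ≤ s, u ∉ S := fun s _ =>
    ⟨min s m, min_le_left s m, fun ⟨x, hx⟩ => (hm _ (min_le_right s m) x).not_gt hx⟩
  choose! w hw using fun s (hs : s ∈ S) => hs
  have hHval : ∀ {s x}, pencil Q₁ Q₂ Q₃ (s, 1) x < 0 → h (w s) = h x := fun {s x} hx =>
    (isProjPreconnected_quadraticForm_neg _).eq (hh.mono (hsub s)) (hw s ⟨x, hx⟩) hx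
  have hH : ContinuousOn (h ∘ w) S := fun s hs =>
    (continuousAt_const.congr
      ((eventually_pencil_neg (hw s hs)).mono fun _ hu => (hHval hu).symm)).continuousWithinAt
  have himage : h '' {x | discriminantForm Q₁ Q₂ Q₃ x < 0} = (h ∘ w) '' S := by
    refine Subset.antisymm ?_ ?_
    · rintro _ ⟨x, hx, rfl⟩
      have hx0 := hf.ne_zero_of_neg hx
      obtain ⟨s, hs⟩ := exists_pencil_neg_of_discriminantForm_neg (hQ₁ x hx0) hx
      exact ⟨s, ⟨x, hs⟩, hHval hs⟩
    · rintro _ ⟨s, hs, rfl⟩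
      exact mem_image_of_mem h (hsub s (hw s hs))
  rw [himage]
  exact (encard_image_le_encard_leftEndpoints hS hleft hH).trans
    (encard_leftEndpoints_le_finrank hf)

end DefinitePencilBound

section AnisotropicPencil

variable {E α : Type*} [NormedAddCommGroup E] [NormedSpace ℝ E]
  [TopologicalSpace α] [DiscreteTopology α] {Q₁ Q₂ Q₃ : QuadraticForm ℝ E}

/-- `P₂` and `P₃` come from the similarity of the parameter plane that maps `(1, 0)` to `t`. -/
theorem exists_discriminantForm_pencil_eq (Q₁ Q₂ Q₃ : QuadraticForm ℝ E) {t : ℝ × ℝ} (ht : t ≠ 0) :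
    ∃ P₂ P₃ : QuadraticForm ℝ E,
      discriminantForm (pencil Q₁ Q₂ Q₃ t) P₂ P₃ = discriminantForm Q₁ Q₂ Q₃ := by
  obtain ⟨a, b⟩ := t
  have hr : a ^ 2 + b ^ 2 ≠ 0 := (sq_add_sq_pos_of_ne_zero ht).ne'
  refine ⟨(a ^ 2 + b ^ 2)⁻¹ • ((-(a * b)) • Q₁ + (a ^ 2 - b ^ 2) • Q₂ + (a * b) • Q₃),
    ((a ^ 2 + b ^ 2) ^ 2)⁻¹ • pencil Q₁ Q₂ Q₃ (-b, a), ?_⟩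
  ext x
  simp only [discriminantForm, pencil_apply, add_apply, smul_apply,
    smul_eq_mul]
  field_simp
  ring

theorem discriminantForm_neg (Q₁ Q₂ Q₃ : QuadraticForm ℝ E) :
    discriminantForm (-Q₁) (-Q₂) (-Q₃) = discriminantForm Q₁ Q₂ Q₃ := by
  ext x
  simp [discriminantForm]

variable [FiniteDimensional ℝ E]

theorem posDef_or_posDef_neg_of_anisotropic (hE : 1 < Module.finrank ℝ E) {Q : QuadraticForm ℝ E}
    (hQ : Q.Anisotropic) : Q.PosDef ∨ (-Q).PosDef := by
  by_contra! hcon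
  obtain ⟨⟨x, hx, hQx⟩, y, hy, hQy⟩ : (∃ x ≠ 0, Q x ≤ 0) ∧ ∃ y ≠ 0, 0 ≤ Q y := by
    simpa [QuadraticMap.PosDef] using hcon
  have hconn : IsPreconnected ({0}ᶜ : Set E) :=
    (isConnected_compl_singleton_of_one_lt_rank
      (by rw [← Module.finrank_eq_rank]; exact_mod_cast hE) 0).isPreconnected
  obtain ⟨z, hz, hQz⟩ := hconn.intermediate_value hx hy
    (contDiff_quadraticForm Q (n := 0)).continuous.continuousOn ⟨hQx, hQy⟩
  exact hz (hQ z hQz)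

theorem encard_image_le_finrank_of_anisotropic (hE : 1 < Module.finrank ℝ E) {t : ℝ × ℝ}
    (ht : t ≠ 0) (hani : (pencil Q₁ Q₂ Q₃ t).Anisotropic)
    (hf : IsSmoothQuartic (discriminantForm Q₁ Q₂ Q₃)) {h : E → α}
    (hh : IsProjLocConst h {x | discriminantForm Q₁ Q₂ Q₃ x < 0}) :
    (h '' {x | discriminantForm Q₁ Q₂ Q₃ x < 0}).encard ≤ Module.finrank ℝ E := by
  obtain ⟨P₂, P₃, heq⟩ := exists_discriminantForm_pencil_eq Q₁ Q₂ Q₃ ht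
  rcases posDef_or_posDef_neg_of_anisotropic hE hani with hpos | hneg
  · rw [← heq] at hf hh ⊢
    exact encard_image_le_finrank_of_posDef hpos hf hh
  · rw [← heq, ← discriminantForm_neg] at hf hh ⊢
    exact encard_image_le_finrank_of_posDef hneg hf hh

end AnisotropicPencil

section FirstHit

/-- The first time `t ≥ 0` at which `p` is nonnegative; it is `0` if there is no such time. -/
noncomputable def firstHit (p : ℝ → ℝ) : ℝ := sInf {t | 0 ≤ t ∧ 0 ≤ p t}

variable {p : ℝ → ℝ}

theorem firstHit_eq {t₀ : ℝ} (h₀ : 0 ≤ t₀) (hneg : ∀ t, 0 ≤ t → t < t₀ → p t < 0)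
    (ht₀ : 0 ≤ p t₀) : firstHit p = t₀ :=
  IsLeast.csInf_eq ⟨⟨h₀, ht₀⟩, fun t ht => not_lt.1 fun hlt => (hneg t ht.1 hlt).not_ge ht.2⟩

theorem isLeast_firstHit (hp : Continuous p) (hhit : ∃ t, 0 ≤ t ∧ 0 ≤ p t) :
    IsLeast {t | 0 ≤ t ∧ 0 ≤ p t} (firstHit p) :=
  (isClosed_Ici.inter (isClosed_le continuous_const hp)).isLeast_csInf hhit ⟨0, fun _ ht => ht.1⟩

theorem firstHit_pos (hp : Continuous p) (hhit : ∃ t, 0 ≤ t ∧ 0 ≤ p t) (h₀ : p 0 < 0) :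
    0 < firstHit p := by
  obtain ⟨hnonneg, hle⟩ := (isLeast_firstHit hp hhit).1
  refine hnonneg.lt_of_ne fun h => h₀.not_ge ?_
  rwa [← h] at hle

theorem neg_of_lt_firstHit (hp : Continuous p) (hhit : ∃ t, 0 ≤ t ∧ 0 ≤ p t) {t : ℝ} (ht : 0 ≤ t)
    (hlt : t < firstHit p) : p t < 0 :=
  not_le.1 fun h => hlt.not_ge ((isLeast_firstHit hp hhit).2 ⟨ht, h⟩)

theorem apply_firstHit_eq_zero (hp : Continuous p) (hhit : ∃ t, 0 ≤ t ∧ 0 ≤ p t) (h₀ : p 0 < 0) :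
    p (firstHit p) = 0 := by
  obtain ⟨hnonneg, hle⟩ := (isLeast_firstHit hp hhit).1
  refine le_antisymm (not_lt.1 fun hpos => ?_) hle
  obtain ⟨t, ht, hzero⟩ := intermediate_value_Icc hnonneg hp.continuousOn ⟨h₀.le, hpos.le⟩
  have hlt : t < firstHit p := ht.2.lt_of_ne fun h => hpos.ne' (h ▸ hzero)
  exact (neg_of_lt_firstHit hp hhit ht.1 hlt).ne hzero

theorem continuousAt_firstHit {X : Type*} [TopologicalSpace X] {F : X → ℝ → ℝ}
    (hF : Continuous (Function.uncurry F)) {x : X} (hhit : ∃ t, 0 ≤ t ∧ 0 ≤ F x t)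
    (hcross : ∃ᶠ t in 𝓝[>] firstHit (F x), 0 < F x t) :
    ContinuousAt (fun y => firstHit (F y)) x := by
  have hFx (y : X) : Continuous (F y) := hF.comp (Continuous.prodMk_right y)
  have hleast := isLeast_firstHit (hFx x) hhit
  have hpos : ∀ t, 0 < F x t → ∀ᶠ y in 𝓝 x, 0 < F y t := fun t ht =>
    (hF.comp (Continuous.prodMk_left t)).continuousAt.eventually (lt_mem_nhds ht)
  have hnear : ∀ b > firstHit (F x), ∃ t < b, 0 ≤ t ∧ 0 < F x t := by
    intro b hb
    obtain ⟨t, hFt, htlt, htb⟩ := (hcross.and_eventually (Ioo_mem_nhdsGT hb)).exists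
    exact ⟨t, htb, hleast.1.1.trans htlt.le, hFt⟩
  refine tendsto_order.2 ⟨fun b hb => ?_, fun b hb => ?_⟩
  · have hneg : ∀ᶠ y in 𝓝 x, ∀ t ∈ Icc 0 b, F y t < 0 :=
      isCompact_Icc.eventually_forall_of_forall_eventually fun t ht =>
        (hF.tendsto (x, t)).eventually_lt_const
          (neg_of_lt_firstHit (hFx x) hhit ht.1 (ht.2.trans_lt hb))
    obtain ⟨t₁, -, h₁, hFt₁⟩ := hnear _ (lt_add_one _)
    filter_upwards [hneg, hpos t₁ hFt₁] with y hy hyt₁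
    have hy' := (isLeast_firstHit (hFx y) ⟨t₁, h₁, hyt₁.le⟩).1
    exact not_le.1 fun h => (hy _ ⟨hy'.1, h⟩).not_ge hy'.2
  · obtain ⟨t₁, ht₁b, h₁, hFt₁⟩ := hnear b hb
    filter_upwards [hpos t₁ hFt₁] with y hy
    exact ((isLeast_firstHit (hFx y) ⟨t₁, h₁, hy.le⟩).2 ⟨h₁, hy.le⟩).trans_lt ht₁b

end FirstHit

section SignChanges

theorem le_natDegree_of_sign_changes {m : ℕ} {p : Polynomial ℝ} {r : Fin (m + 1) → ℝ}
    (hr : StrictMono r) (hsign : ∀ i : Fin m, p.eval (r i.castSucc) * p.eval (r i.succ) < 0) :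
    m ≤ p.natDegree := by
  have hroot : ∀ i : Fin m, ∃ c ∈ Ioo (r i.castSucc) (r i.succ), p.eval c = 0 := by
    intro i
    have hle : r i.castSucc ≤ r i.succ := (hr i.castSucc_lt_succ).le
    rcases mul_neg_iff.1 (hsign i) with ⟨hpos, hneg⟩ | ⟨hneg, hpos⟩
    · exact intermediate_value_Ioo' hle p.continuousOn ⟨hneg, hpos⟩
    · exact intermediate_value_Ioo hle p.continuousOn ⟨hneg, hpos⟩
  choose c hc hcroot using hroot
  have hmono : StrictMono c := fun i j hij =>
    (hc i).2.trans_le ((hr.monotone (Fin.succ_le_castSucc_iff.2 hij)).trans (hc j).1.le)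
  rcases m.eq_zero_or_pos with rfl | hm
  · exact Nat.zero_le _
  have hp : p ≠ 0 := by
    rintro rfl
    simpa using hsign ⟨0, hm⟩
  calc m = (Finset.univ.map ⟨c, hmono.injective⟩).card := by simp
    _ ≤ p.natDegree := Polynomial.card_le_degree_of_subset_roots fun x hx => by
        obtain ⟨i, rfl⟩ : ∃ i, c i = x := by simpa using hx
        exact (Polynomial.mem_roots hp).2 (hcroot i)

/-- Raising the graph slightly turns the touching points into sign changes. -/
theorem six_le_natDegree_of_sign_changes {p : Polynomial ℝ} {r₀ s₁ r₁ s₂ r₂ s₃ r₃ : ℝ}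
    (h₀₁ : r₀ < s₁) (h₁₁ : s₁ < r₁) (h₁₂ : r₁ < s₂) (h₂₂ : s₂ < r₂) (h₂₃ : r₂ < s₃) (h₃₃ : s₃ < r₃)
    (hr₀ : p.eval r₀ < 0) (hs₁ : 0 ≤ p.eval s₁) (hr₁ : p.eval r₁ < 0) (hs₂ : 0 ≤ p.eval s₂)
    (hr₂ : p.eval r₂ < 0) (hs₃ : 0 ≤ p.eval s₃) (hr₃ : p.eval r₃ < 0) : 6 ≤ p.natDegree := by
  obtain ⟨ε, hε₀, hε⟩ := exists_between (lt_min (lt_min (neg_pos.2 hr₀) (neg_pos.2 hr₁))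
    (lt_min (neg_pos.2 hr₂) (neg_pos.2 hr₃)))
  simp only [lt_min_iff, lt_neg] at hε
  obtain ⟨⟨hε₀', hε₁⟩, hε₂, hε₃⟩ := hε
  rw [← Polynomial.natDegree_add_C (a := ε)]
  refine le_natDegree_of_sign_changes (m := 6) (r := ![r₀, s₁, r₁, s₂, r₂, s₃, r₃]) ?_ ?_
  · simp [*]
  · have hneg : ∀ t, p.eval t < -ε → (p + Polynomial.C ε).eval t < 0 := fun t ht => by
      rw [Polynomial.eval_add, Polynomial.eval_C]
      linarith
    have hpos : ∀ t, 0 ≤ p.eval t → 0 < (p + Polynomial.C ε).eval t := fun t ht => by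
      rw [Polynomial.eval_add, Polynomial.eval_C]
      linarith
    intro i
    fin_cases i
    exacts [mul_neg_of_neg_of_pos (hneg _ hε₀') (hpos _ hs₁),
      mul_neg_of_pos_of_neg (hpos _ hs₁) (hneg _ hε₁),
      mul_neg_of_neg_of_pos (hneg _ hε₁) (hpos _ hs₂),
      mul_neg_of_pos_of_neg (hpos _ hs₂) (hneg _ hε₂),
      mul_neg_of_neg_of_pos (hneg _ hε₂) (hpos _ hs₃),
      mul_neg_of_pos_of_neg (hpos _ hs₃) (hneg _ hε₃)]

end SignChanges

section SeparatedPairs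

variable {E α β : Type*} [NormedAddCommGroup E] [NormedSpace ℝ E] [TopologicalSpace α]
  [TopologicalSpace β] {f : E → ℝ} {φ : E → β} {g : E → α} {x a : E} {t u : ℝ}

/-- `x` and `a` lie in the negative region of `f`, and `φ` shows that they lie in different
components of it. -/
structure Separated (f : E → ℝ) (φ : E → β) (x a : E) : Prop where
  left_neg : f x < 0
  right_neg : f a < 0
  ne : φ x ≠ φ a

/-- The point where the ray from `x` in direction `a` first leaves the negative region of `f`. -/
noncomputable def exitPoint (f : E → ℝ) (x a : E) : E :=
  x + firstHit (fun t => f (x + t • a)) • a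

namespace Separated

theorem neg_right (hf : IsSmoothQuartic f) (hφ : IsProjLocConst φ {x | x ≠ 0 ∧ f x ≤ 0})
    (h : Separated f φ x a) : Separated f φ x (-a) :=
  ⟨h.left_neg, by rw [hf.map_neg]; exact h.right_neg, by
    rw [hφ.map_neg (hf.mem_nonpos_of_neg h.right_neg)]; exact h.ne⟩

theorem smul_left (hf : IsSmoothQuartic f) (hφ : IsProjLocConst φ {x | x ≠ 0 ∧ f x ≤ 0})
    (h : Separated f φ x a) {c : ℝ} (hc : c ≠ 0) : Separated f φ (c • x) a :=
  ⟨hf.map_smul_neg hc h.left_neg, h.right_neg, by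
    rw [hφ.map_smul x (hf.mem_nonpos_of_neg h.left_neg) c hc]; exact h.ne⟩

theorem notMem_span (hf : IsSmoothQuartic f) (hφ : IsProjLocConst φ {x | x ≠ 0 ∧ f x ≤ 0})
    (h : Separated f φ x a) : x ∉ Submodule.span ℝ {a} := by
  intro hx
  obtain ⟨c, rfl⟩ := Submodule.mem_span_singleton.1 hx
  have hc : c ≠ 0 := by
    rintro rfl
    exact hf.ne_zero_of_neg h.left_neg (zero_smul ℝ a)
  exact h.ne (hφ.map_smul a (hf.mem_nonpos_of_neg h.right_neg) c hc)

end Separated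

theorem add_smul_ne_zero_of_notMem_span (hx : x ∉ Submodule.span ℝ {a}) (t : ℝ) :
    x + t • a ≠ 0 := fun h =>
  hx (Submodule.mem_span_singleton.2 ⟨-t, by rw [neg_smul, eq_neg_of_add_eq_zero_left h]⟩)

namespace IsSmoothQuartic

theorem exists_forall_abs_neg (hf : IsSmoothQuartic f) (ha : f a < 0) (x : E) :
    ∃ T, ∀ᶠ w in 𝓝 x, ∀ t : ℝ, T ≤ |t| → f (w + t • a) < 0 := by
  have hcont : Continuous fun p : E × ℝ => f (a + p.2 • p.1) :=
    hf.contDiff.continuous.comp (by fun_prop)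
  have hnear : ∀ᶠ p : E × ℝ in 𝓝 x ×ˢ 𝓝 0, f (a + p.2 • p.1) < 0 := by
    rw [← nhds_prod_eq]
    exact (hcont.tendsto (x, 0)).eventually_lt_const (by simpa using ha)
  obtain ⟨P, hP, R, hR, hPR⟩ := eventually_prod_iff.1 hnear
  obtain ⟨ε, hε, hRε⟩ := Metric.eventually_nhds_iff.1 hR
  refine ⟨2 / ε, hP.mono fun w hw t ht => ?_⟩
  have htpos : 0 < |t| := (by positivity : 0 < 2 / ε).trans_le ht
  have ht0 : t ≠ 0 := abs_pos.1 htpos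
  have hinv : dist t⁻¹ 0 < ε := by
    rw [Real.dist_0_eq_abs, abs_inv, inv_lt_comm₀ htpos hε]
    refine lt_of_lt_of_le ?_ ht
    rw [inv_eq_one_div]
    gcongr
    norm_num
  have hscale := hf.map_smul_neg ht0 (hPR hw (hRε hinv))
  rwa [smul_add, smul_inv_smul₀ ht0, add_comm] at hscale

theorem exists_mem_Ioo_ne_zero (hf : IsSmoothQuartic f) (ha : f a < 0) (x : E) (htu : t < u) :
    ∃ s ∈ Ioo t u, f (x + s • a) ≠ 0 := by
  obtain ⟨p, -, hp⟩ := hf.exists_polynomial x a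
  obtain ⟨T, hT⟩ := hf.exists_forall_abs_neg ha x
  have hp0 : p ≠ 0 := by
    rintro rfl
    have h := hT.self_of_nhds T (le_abs_self T)
    rw [← hp, Polynomial.eval_zero] at h
    exact lt_irrefl 0 h
  obtain ⟨s, hs, hroot⟩ := ((Ioo_infinite htu).sdiff (p.rootSet_finite ℝ)).nonempty
  refine ⟨s, hs, fun h => hroot ?_⟩
  rw [Polynomial.mem_rootSet_of_ne hp0, Polynomial.coe_aeval_eq_eval, hp, h]

end IsSmoothQuartic

variable [DiscreteTopology β]

namespace Separated

theorem exists_nonneg (hf : IsSmoothQuartic f) (hφ : IsProjLocConst φ {x | x ≠ 0 ∧ f x ≤ 0})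
    (h : Separated f φ x a) : ∃ t : ℝ, 0 ≤ t ∧ 0 ≤ f (x + t • a) := by
  by_contra! hcon
  refine h.ne (hφ.eq_of_segment_subset ?_)
  suffices hseg : ∀ y ∈ segment ℝ x a, f y < 0 from
    fun y hy => hf.mem_nonpos_of_neg (hseg y hy)
  rintro _ ⟨c, d, hc, hd, hcd, rfl⟩
  rcases hc.eq_or_lt with rfl | hc
  · obtain rfl : d = 1 := by linarith
    simpa using h.right_neg
  · have hscale := hf.map_smul_neg hc.ne' (hcon (d / c) (by positivity))
    rwa [smul_add, smul_smul, mul_div_cancel₀ d hc.ne'] at hscale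

/-- A zero between the two points would force the quartic to change sign six times on the
line. -/
theorem neg_of_mem_Icc (hf : IsSmoothQuartic f) (hφ : IsProjLocConst φ {x | x ≠ 0 ∧ f x ≤ 0})
    (hx : Separated f φ x a) (hu : Separated f φ (x + u • a) a) (ht : t ∈ Icc 0 u) :
    f (x + t • a) < 0 := by
  by_contra! hft
  obtain ⟨p, hdeg, hp⟩ := hf.exists_polynomial x a
  obtain ⟨T, hT⟩ := hf.exists_forall_abs_neg hx.right_neg x
  obtain ⟨v, hv, hfv⟩ := (hx.neg_right hf hφ).exists_nonneg hf hφ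
  obtain ⟨w, hw, hfw⟩ := hu.exists_nonneg hf hφ
  have hfv' : 0 ≤ f (x + (-v) • a) := by rwa [neg_smul, ← smul_neg]
  have hfw' : 0 ≤ f (x + (u + w) • a) := by rwa [add_smul, ← add_assoc]
  have hne : ∀ {r s : ℝ}, f (x + r • a) < 0 → 0 ≤ f (x + s • a) → r ≠ s := by
    rintro r _ hr hs rfl
    exact hr.not_ge hs
  have hx0 : f (x + (0 : ℝ) • a) < 0 := by simpa using hx.left_neg
  have hbound : ∀ {s : ℝ}, 0 ≤ f (x + s • a) → |s| < T := fun {s} hs =>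
    not_le.1 fun hle => (hT.self_of_nhds s hle).not_ge hs
  have hTpos : 0 < T := (abs_nonneg _).trans_lt (hbound hft)
  have hfar : ∀ s : ℝ, |s| = T → p.eval s < 0 := fun s hs =>
    (hp s).trans_lt (hT.self_of_nhds s hs.ge)
  have hsix := six_le_natDegree_of_sign_changes
    (neg_lt_of_abs_lt (hbound hfv')) ((neg_nonpos.2 hv).lt_of_ne' (hne hx0 hfv'))
    (ht.1.lt_of_ne (hne hx0 hft)) (ht.2.lt_of_ne' (hne hu.left_neg hft))
    ((le_add_of_nonneg_right hw).lt_of_ne (hne hu.left_neg hfw')) (lt_of_abs_lt (hbound hfw'))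
    (hfar _ (by rw [abs_neg, abs_of_pos hTpos])) ((hp _).symm ▸ hfv') ((hp _).symm ▸ hx0)
    ((hp _).symm ▸ hft) ((hp _).symm ▸ hu.left_neg) ((hp _).symm ▸ hfw') (hfar T (abs_of_pos hTpos))
  omega

theorem frequently_pos (hf : IsSmoothQuartic f) (hφ : IsProjLocConst φ {x | x ≠ 0 ∧ f x ≤ 0})
    (h : Separated f φ x a) :
    ∃ᶠ t in 𝓝[>] firstHit (fun t => f (x + t • a)), 0 < f (x + t • a) := by
  intro hcon
  have hcont : Continuous fun t : ℝ => f (x + t • a) := hf.contDiff.continuous.comp (by fun_prop)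
  have hhit := h.exists_nonneg hf hφ
  set t₀ := firstHit fun t : ℝ => f (x + t • a)
  have ht₀ : 0 ≤ t₀ := (isLeast_firstHit hcont hhit).1.1
  have hzero : f (x + t₀ • a) = 0 :=
    apply_firstHit_eq_zero hcont hhit (by simpa using h.left_neg)
  obtain ⟨u, hu, hle⟩ := mem_nhdsGT_iff_exists_Ioo_subset.1 hcon
  obtain ⟨s, hs, hfs⟩ := hf.exists_mem_Ioo_ne_zero h.right_neg x hu
  have hfs' : f (x + s • a) < 0 := (not_lt.1 (hle hs)).lt_of_ne hfs
  have hpath : MapsTo (fun t : ℝ => x + t • a) (Icc 0 s) {x | x ≠ 0 ∧ f x ≤ 0} := by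
    intro t ht
    refine ⟨add_smul_ne_zero_of_notMem_span (h.notMem_span hf hφ) t, ?_⟩
    rcases lt_trichotomy t t₀ with hlt | rfl | hgt
    · exact (neg_of_lt_firstHit hcont hhit ht.1 hlt).le
    · exact hzero.le
    · exact not_lt.1 (hle ⟨hgt, ht.2.trans_lt hs.2⟩)
  have hs0 : 0 ≤ s := ht₀.trans hs.1.le
  have hφs : φ x = φ (x + s • a) := by
    simpa using isPreconnected_Icc.constant (hφ.continuousOn.comp (by fun_prop) hpath)
      (left_mem_Icc.2 hs0) (right_mem_Icc.2 hs0)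
  exact (h.neg_of_mem_Icc hf hφ ⟨hfs', h.right_neg, hφs ▸ h.ne⟩ ⟨ht₀, hs.1.le⟩).ne hzero

theorem exitPoint_mem (hf : IsSmoothQuartic f) (hφ : IsProjLocConst φ {x | x ≠ 0 ∧ f x ≤ 0})
    (h : Separated f φ x a) : exitPoint f x a ∈ {x | x ≠ 0 ∧ f x = 0} :=
  ⟨add_smul_ne_zero_of_notMem_span (h.notMem_span hf hφ) _,
    apply_firstHit_eq_zero (hf.contDiff.continuous.comp (by fun_prop)) (h.exists_nonneg hf hφ)
      (by simpa using h.left_neg)⟩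

theorem continuousAt_exitPoint (hf : IsSmoothQuartic f)
    (hφ : IsProjLocConst φ {x | x ≠ 0 ∧ f x ≤ 0}) (h : Separated f φ x a) :
    ContinuousAt (fun p : E × E => exitPoint f p.1 p.2) (x, a) := by
  have hF : Continuous (Function.uncurry fun (p : E × E) (t : ℝ) => f (p.1 + t • p.2)) :=
    hf.contDiff.continuous.comp (by fun_prop)
  have hhit : ContinuousAt (fun p : E × E => firstHit fun t => f (p.1 + t • p.2)) (x, a) :=
    continuousAt_firstHit hF (h.exists_nonneg hf hφ) (h.frequently_pos hf hφ)
  exact continuousAt_fst.add (hhit.smul continuousAt_snd)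

theorem continuousOn_exitPoint (hf : IsSmoothQuartic f)
    (hφ : IsProjLocConst φ {x | x ≠ 0 ∧ f x ≤ 0}) (hg : IsProjLocConst g {x | x ≠ 0 ∧ f x = 0}) :
    ContinuousOn (fun p : E × E => g (exitPoint f p.1 p.2)) {p | Separated f φ p.1 p.2} :=
  hg.continuousOn.comp (fun _ h => (continuousAt_exitPoint hf hφ h).continuousWithinAt)
    fun _ h => exitPoint_mem hf hφ h

theorem isOpen_setOf (hf : IsSmoothQuartic f) (hφ : IsProjLocConst φ {x | x ≠ 0 ∧ f x ≤ 0}) :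
    IsOpen {p : E × E | Separated f φ p.1 p.2} := by
  have hφneg : IsProjLocConst φ {x | f x < 0} := hφ.mono fun _ => hf.mem_nonpos_of_neg
  refine isOpen_iff_mem_nhds.2 fun p hp => ?_
  have hl := hf.isOpen_neg.mem_nhds hp.left_neg
  have hr := hf.isOpen_neg.mem_nhds hp.right_neg
  filter_upwards [continuousAt_fst.eventually hl, continuousAt_snd.eventually hr,
    continuousAt_fst.eventually (hφneg.eventually_eq hl),
    continuousAt_snd.eventually (hφneg.eventually_eq hr)] with q hql hqr hφl hφr
  exact ⟨hql, hqr, by rw [hφl, hφr]; exact hp.ne⟩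

theorem of_mem_Icc (hf : IsSmoothQuartic f) (hφ : IsProjLocConst φ {x | x ≠ 0 ∧ f x ≤ 0})
    (hx : Separated f φ x a) (hu : Separated f φ (x + u • a) a) (ht : t ∈ Icc 0 u) :
    Separated f φ (x + t • a) a := by
  have hneg : ∀ s ∈ Icc 0 u, f (x + s • a) < 0 := fun s hs => hx.neg_of_mem_Icc hf hφ hu hs
  have hpath : MapsTo (fun s : ℝ => x + s • a) (Icc 0 t) {x | x ≠ 0 ∧ f x ≤ 0} := fun s hs =>
    hf.mem_nonpos_of_neg (hneg s ⟨hs.1, hs.2.trans ht.2⟩)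
  have hφt : φ x = φ (x + t • a) := by
    simpa using isPreconnected_Icc.constant (hφ.continuousOn.comp (by fun_prop) hpath)
      (left_mem_Icc.2 ht.1) (right_mem_Icc.2 ht.1)
  exact ⟨hneg t ht, hx.right_neg, hφt ▸ hx.ne⟩

theorem apply_exitPoint_neg (hf : IsSmoothQuartic f)
    (hφ : IsProjLocConst φ {x | x ≠ 0 ∧ f x ≤ 0}) (hg : IsProjLocConst g {x | x ≠ 0 ∧ f x = 0})
    (hx : Separated f φ x a) : g (exitPoint f (-x) (-a)) = g (exitPoint f x a) := by
  have hexit : exitPoint f (-x) (-a) = -exitPoint f x a := by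
    simp only [exitPoint, smul_neg, ← neg_add, hf.map_neg]
  rw [hexit, hg.map_neg (hx.exitPoint_mem hf hφ)]

variable [DiscreteTopology α]

theorem apply_exitPoint_eq_of_segment (hf : IsSmoothQuartic f)
    (hφ : IsProjLocConst φ {x | x ≠ 0 ∧ f x ≤ 0}) (hg : IsProjLocConst g {x | x ≠ 0 ∧ f x = 0})
    {y b : E} (h : ∀ z ∈ segment ℝ x y, ∀ c ∈ segment ℝ a b, Separated f φ z c) :
    g (exitPoint f x a) = g (exitPoint f y b) :=
  (convex_segment (x, a) (y, b)).isPreconnected.constant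
    ((continuousOn_exitPoint hf hφ hg).mono fun _ hp =>
      h _ (Prod.segment_subset _ _ hp).1 _ (Prod.segment_subset _ _ hp).2)
    (left_mem_segment ℝ _ _) (right_mem_segment ℝ _ _)

theorem apply_exitPoint_add_smul (hf : IsSmoothQuartic f)
    (hφ : IsProjLocConst φ {x | x ≠ 0 ∧ f x ≤ 0}) (hg : IsProjLocConst g {x | x ≠ 0 ∧ f x = 0})
    (hx : Separated f φ x a) (hu : Separated f φ (x + u • a) a) :
    g (exitPoint f (x + u • a) a) = g (exitPoint f x a) := by
  wlog hu0 : 0 ≤ u generalizing x u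
  · have hback : x + u • a + (-u) • a = x := by module
    have h := this hu (u := -u) (by rwa [hback]) (by linarith)
    rw [hback] at h
    exact h.symm
  refine (apply_exitPoint_eq_of_segment hf hφ hg ?_).symm
  rw [segment_same, segment_eq_image']
  rintro _ ⟨θ, hθ, rfl⟩ _ rfl
  simp only [add_sub_cancel_left, smul_smul]
  exact hx.of_mem_Icc hf hφ hu ⟨mul_nonneg hθ.1 hu0, mul_le_of_le_one_left hu0 hθ.2⟩

theorem apply_exitPoint_smul (hf : IsSmoothQuartic f)
    (hφ : IsProjLocConst φ {x | x ≠ 0 ∧ f x ≤ 0}) (hg : IsProjLocConst g {x | x ≠ 0 ∧ f x = 0})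
    (hx : Separated f φ x a) {c : ℝ} (hc : 0 < c) :
    g (exitPoint f (c • x) a) = g (exitPoint f x a) := by
  refine (apply_exitPoint_eq_of_segment hf hφ hg ?_).symm
  rw [segment_same]
  rintro _ ⟨r, s, hr, hs, hrs, rfl⟩ _ rfl
  rw [smul_smul, ← add_smul]
  refine hx.smul_left hf hφ (ne_of_gt ?_)
  nlinarith [mul_nonneg hs hc.le]

theorem eventually_apply_exitPoint_eq (hf : IsSmoothQuartic f)
    (hφ : IsProjLocConst φ {x | x ≠ 0 ∧ f x ≤ 0}) (hg : IsProjLocConst g {x | x ≠ 0 ∧ f x = 0})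
    (h : Separated f φ x a) : ∀ᶠ y in 𝓝 x, g (exitPoint f y a) = g (exitPoint f x a) :=
  (Continuous.prodMk_left a).continuousAt.eventually
    (((continuousOn_exitPoint hf hφ hg).continuousAt ((isOpen_setOf hf hφ).mem_nhds h)).eventually
      ((isOpen_discrete {g (exitPoint f x a)}).mem_nhds rfl))

end Separated

/-- The points, separated from `a`, on chords parallel to `a` that run through the negative region
from a zero where `g` is `b₁` to a zero where `g` is `b₂`. -/
def chordSet (f : E → ℝ) (φ : E → β) (g : E → α) (a : E) (b₁ b₂ : α) : Set E :=
  {x | Separated f φ x a ∧ g (exitPoint f x (-a)) = b₁ ∧ g (exitPoint f x a) = b₂}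

/-- The points `w + s • a` with `s` between `t` and `u` form a chord of the kind used in
`chordSet`. -/
structure IsChord (f : E → ℝ) (φ : E → β) (g : E → α) (a : E) (b₁ b₂ : α) (w : E) (t u : ℝ) :
    Prop where
  le : t ≤ u
  left_eq_zero : f (w + t • a) = 0
  right_eq_zero : f (w + u • a) = 0
  left_apply : g (w + t • a) = b₁
  right_apply : g (w + u • a) = b₂
  mem_chordSet : ∀ s ∈ Ioo t u, w + s • a ∈ chordSet f φ g a b₁ b₂

variable [DiscreteTopology α] {b₁ b₂ : α}

theorem isOpen_chordSet (hf : IsSmoothQuartic f) (hφ : IsProjLocConst φ {x | x ≠ 0 ∧ f x ≤ 0})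
    (hg : IsProjLocConst g {x | x ≠ 0 ∧ f x = 0}) : IsOpen (chordSet f φ g a b₁ b₂) := by
  refine isOpen_iff_mem_nhds.2 fun x ⟨hx, hx₁, hx₂⟩ => ?_
  filter_upwards [((Separated.isOpen_setOf hf hφ).preimage (Continuous.prodMk_left a)).mem_nhds hx,
    (hx.neg_right hf hφ).eventually_apply_exitPoint_eq hf hφ hg,
    hx.eventually_apply_exitPoint_eq hf hφ hg] with y hy hy₁ hy₂
  exact ⟨hy, hy₁.trans hx₁, hy₂.trans hx₂⟩

theorem mem_chordSet_of_mem_closure (hf : IsSmoothQuartic f)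
    (hφ : IsProjLocConst φ {x | x ≠ 0 ∧ f x ≤ 0}) (hg : IsProjLocConst g {x | x ≠ 0 ∧ f x = 0})
    (hx : x ∈ closure (chordSet f φ g a b₁ b₂)) (hfx : f x < 0) :
    x ∈ chordSet f φ g a b₁ b₂ := by
  have hfreq := mem_closure_iff_frequently.1 hx
  have hφx := (hφ.mono fun _ => hf.mem_nonpos_of_neg).eventually_eq
    (hf.isOpen_neg.mem_nhds hfx)
  obtain ⟨y, ⟨hy, -⟩, hφy⟩ := (hfreq.and_eventually hφx).exists
  have hsep : Separated f φ x a := ⟨hfx, hy.right_neg, hφy ▸ hy.ne⟩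
  obtain ⟨z, ⟨⟨-, hz₁, hz₂⟩, hxz₁⟩, hxz₂⟩ := ((hfreq.and_eventually
    ((hsep.neg_right hf hφ).eventually_apply_exitPoint_eq hf hφ hg)).and_eventually
    (hsep.eventually_apply_exitPoint_eq hf hφ hg)).exists
  exact ⟨hsep, hxz₁.symm.trans hz₁, hxz₂.symm.trans hz₂⟩

theorem add_smul_mem_chordSet (hf : IsSmoothQuartic f)
    (hφ : IsProjLocConst φ {x | x ≠ 0 ∧ f x ≤ 0}) (hg : IsProjLocConst g {x | x ≠ 0 ∧ f x = 0})
    (hx : x ∈ chordSet f φ g a b₁ b₂) (hu : Separated f φ (x + u • a) a) :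
    x + u • a ∈ chordSet f φ g a b₁ b₂ := by
  obtain ⟨hsep, hx₁, hx₂⟩ := hx
  have hua : x + u • a = x + (-u) • (-a) := by rw [smul_neg, neg_smul, neg_neg]
  refine ⟨hu, ?_, (hsep.apply_exitPoint_add_smul hf hφ hg hu).trans hx₂⟩
  have hneg := hu.neg_right hf hφ
  rw [hua] at hneg ⊢
  exact ((hsep.neg_right hf hφ).apply_exitPoint_add_smul hf hφ hg hneg).trans hx₁

theorem exists_isChord (hf : IsSmoothQuartic f) (hφ : IsProjLocConst φ {x | x ≠ 0 ∧ f x ≤ 0})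
    (hg : IsProjLocConst g {x | x ≠ 0 ∧ f x = 0}) {w : E}
    (hx : w + t • a ∈ chordSet f φ g a b₁ b₂) :
    ∃ r s, IsChord f φ g a b₁ b₂ w r s := by
  obtain ⟨hsep, hx₁, hx₂⟩ := id hx
  have hsep' := hsep.neg_right hf hφ
  have hcont (b : E) : Continuous fun s : ℝ => f (w + t • a + s • b) :=
    hf.contDiff.continuous.comp (by fun_prop)
  have h₀ (b : E) : f (w + t • a + (0 : ℝ) • b) < 0 := by simpa using hsep.left_neg
  set p := firstHit fun s : ℝ => f (w + t • a + s • -a) with hp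
  set q := firstHit fun s : ℝ => f (w + t • a + s • a) with hq
  have hp0 : 0 < p := firstHit_pos (hcont _) (hsep'.exists_nonneg hf hφ) (h₀ _)
  have hq0 : 0 < q := firstHit_pos (hcont _) (hsep.exists_nonneg hf hφ) (h₀ _)
  have hleft : exitPoint f (w + t • a) (-a) = w + (t - p) • a := by
    rw [exitPoint, ← hp]; module
  have hright : exitPoint f (w + t • a) a = w + (t + q) • a := by
    rw [exitPoint, ← hq]; module
  have hneg : ∀ s ∈ Ioo (t - p) (t + q), f (w + s • a) < 0 := by
    intro s hs
    rcases le_total s t with hst | hst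
    · have h := neg_of_lt_firstHit (hcont _) (hsep'.exists_nonneg hf hφ) (sub_nonneg.2 hst)
        (sub_lt_comm.1 hs.1)
      rwa [show w + t • a + (t - s) • -a = w + s • a by module] at h
    · have h := neg_of_lt_firstHit (hcont _) (hsep.exists_nonneg hf hφ) (sub_nonneg.2 hst)
        (sub_lt_iff_lt_add'.2 hs.2)
      rwa [show w + t • a + (s - t) • a = w + s • a by module] at h
  refine ⟨t - p, t + q, by linarith, hleft ▸ (hsep'.exitPoint_mem hf hφ).2,
    hright ▸ (hsep.exitPoint_mem hf hφ).2, hleft ▸ hx₁, hright ▸ hx₂, fun s hs => ?_⟩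
  have hφs : φ (w + t • a) = φ (w + s • a) := isPreconnected_Ioo.constant
    (hφ.continuousOn.comp (f := fun s : ℝ => w + s • a) (by fun_prop)
      fun r hr => hf.mem_nonpos_of_neg (hneg r hr)) ⟨by linarith, by linarith⟩ hs
  have hts : w + s • a = w + t • a + (s - t) • a := by module
  rw [hts] at hφs ⊢
  exact add_smul_mem_chordSet hf hφ hg hx
    ⟨hts ▸ hneg s hs, hsep.right_neg, hφs ▸ hsep.ne⟩

theorem IsChord.exists_mem_chordSet_of_tendsto (hf : IsSmoothQuartic f)
    (hφ : IsProjLocConst φ {x | x ≠ 0 ∧ f x ≤ 0}) (hg : IsProjLocConst g {x | x ≠ 0 ∧ f x = 0})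
    (hb : b₁ ≠ b₂) {w : ℕ → E} {r s : ℕ → ℝ} (h : ∀ n, IsChord f φ g a b₁ b₂ (w n) (r n) (s n))
    (hw : ∀ n, w n ∉ Submodule.span ℝ {a}) (hx : x ∉ Submodule.span ℝ {a}) (ha : f a < 0)
    (hwx : Tendsto w atTop (𝓝 x)) (hr : Tendsto r atTop (𝓝 t)) (hs : Tendsto s atTop (𝓝 u)) :
    ∃ v : ℝ, x + v • a ∈ chordSet f φ g a b₁ b₂ := by
  have hfc := hf.contDiff.continuous
  have hlim {q : ℕ → ℝ} {v : ℝ} (hq : Tendsto q atTop (𝓝 v)) :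
      Tendsto (fun n : ℕ => w n + q n • a) atTop (𝓝 (x + v • a)) :=
    hwx.add (hq.smul_const a)
  have hend {q : ℕ → ℝ} {v : ℝ} {b : α} (hq : Tendsto q atTop (𝓝 v))
      (hzero : ∀ n, f (w n + q n • a) = 0) (hgb : ∀ n, g (w n + q n • a) = b) :
      g (x + v • a) = b :=
    hg.apply_eq_of_tendsto (hlim hq)
      (fun n => ⟨add_smul_ne_zero_of_notMem_span (hw n) _, hzero n⟩)
      ⟨add_smul_ne_zero_of_notMem_span hx v, tendsto_nhds_unique ((hfc.tendsto _).comp (hlim hq))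
        (tendsto_const_nhds.congr fun n => (hzero n).symm)⟩ hgb
  have hgt := hend hr (fun n => (h n).left_eq_zero) fun n => (h n).left_apply
  have hgu := hend hs (fun n => (h n).right_eq_zero) fun n => (h n).right_apply
  have htu : t < u := (le_of_tendsto_of_tendsto' hr hs fun n => (h n).le).lt_of_ne fun htu =>
    hb (by rw [← hgt, ← hgu, htu])
  obtain ⟨v, hv, hfv⟩ := hf.exists_mem_Ioo_ne_zero ha x htu
  have hmem : ∀ᶠ n in atTop, w n + v • a ∈ chordSet f φ g a b₁ b₂ := by
    filter_upwards [hr.eventually_lt_const hv.1, hs.eventually_const_lt hv.2] with n hrn hsn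
    exact (h n).mem_chordSet v ⟨hrn, hsn⟩
  have hv_lim := hlim (tendsto_const_nhds (x := v))
  have hfv_le : f (x + v • a) ≤ 0 := le_of_tendsto ((hfc.tendsto _).comp hv_lim)
    (hmem.mono fun n hn => hn.1.left_neg.le)
  exact ⟨v, mem_chordSet_of_mem_closure hf hφ hg (mem_closure_of_tendsto hv_lim hmem)
    (hfv_le.lt_of_ne hfv)⟩

/-- The ends of chords stay bounded, and a limit chord cannot degenerate because its ends carry
different values of `g`. -/
theorem exists_add_smul_mem_chordSet_of_mem_closure (hf : IsSmoothQuartic f)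
    (hφ : IsProjLocConst φ {x | x ≠ 0 ∧ f x ≤ 0}) (hg : IsProjLocConst g {x | x ≠ 0 ∧ f x = 0})
    (hb : b₁ ≠ b₂) (ha : f a < 0) (hx : x ∉ Submodule.span ℝ {a})
    (hcl : x ∈ closure {w | ∃ v : ℝ, w + v • a ∈ chordSet f φ g a b₁ b₂}) :
    ∃ v : ℝ, x + v • a ∈ chordSet f φ g a b₁ b₂ := by
  obtain ⟨T, hT⟩ := hf.exists_forall_abs_neg ha x
  obtain ⟨w, hw, hwx⟩ := mem_closure_iff_seq_limit.1
    ((mem_closure_iff_frequently.1 hcl).and_eventually hT |> mem_closure_iff_frequently.2)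
  have hchord (n : ℕ) : ∃ r s, IsChord f φ g a b₁ b₂ (w n) r s :=
    let ⟨_, hv⟩ := (hw n).1
    exists_isChord hf hφ hg hv
  choose r s hrs using hchord
  have hmem (n : ℕ) : w n ∉ Submodule.span ℝ {a} := by
    obtain ⟨v, hv⟩ := (hw n).1
    exact fun hspan => hv.1.notMem_span hf hφ
      (add_mem hspan (Submodule.smul_mem _ _ (Submodule.mem_span_singleton_self a)))
  have hbound {n : ℕ} {q : ℝ} (hq : f (w n + q • a) = 0) : q ∈ Icc (-T) T :=
    abs_le.1 (le_of_not_ge fun hle => ((hw n).2 q hle).ne hq)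
  obtain ⟨p, -, ψ, hψ, hp⟩ := (isCompact_Icc.prod isCompact_Icc).tendsto_subseq
    (x := fun n => (r n, s n)) fun n => ⟨hbound (hrs n).left_eq_zero, hbound (hrs n).right_eq_zero⟩
  exact IsChord.exists_mem_chordSet_of_tendsto hf hφ hg hb (fun n => hrs (ψ n))
    (fun n => hmem (ψ n)) hx ha (hwx.comp hψ.tendsto_atTop) hp.fst_nhds hp.snd_nhds

/-- If the two values differed, the chords through translates of the chord set would fill the
complement of the line spanned by `a`, which is connected; the chord of `-x` would then carry the
same values as that of `x` in the same order, but central symmetry reverses them. -/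
theorem Separated.apply_exitPoint_neg_right (hE : 3 ≤ Module.finrank ℝ E)
    (hf : IsSmoothQuartic f) (hφ : IsProjLocConst φ {x | x ≠ 0 ∧ f x ≤ 0})
    (hg : IsProjLocConst g {x | x ≠ 0 ∧ f x = 0}) (h : Separated f φ x a) :
    g (exitPoint f x (-a)) = g (exitPoint f x a) := by
  by_contra hb
  set U := {w | ∃ v : ℝ, w + v • a ∈
    chordSet f φ g a (g (exitPoint f x (-a))) (g (exitPoint f x a))} with hU
  have hUopen : IsOpen U := by
    rw [hU, ofPred_exists]
    exact isOpen_iUnion fun v => (isOpen_chordSet hf hφ hg).preimage (continuous_add_const _)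
  have hconn : IsPreconnected ((Submodule.span ℝ {a} : Set E)ᶜ) := by
    have := Module.finite_of_finrank_pos (R := ℝ) (M := E) (by lia)
    have hcodim := (Submodule.span ℝ {a}).finrank_quotient_add_finrank
    rw [finrank_span_singleton (hf.ne_zero_of_neg h.right_neg)] at hcodim
    refine (isConnected_compl_of_one_lt_codim ?_).isPreconnected
    exact_mod_cast Module.lt_rank_of_lt_finrank (n := 1) (by lia)
  have hxU : x ∈ U := ⟨0, by simpa using ⟨h, rfl, rfl⟩⟩
  have hxa := h.notMem_span hf hφ
  obtain ⟨v, hv, hv₁, -⟩ : -x ∈ U := hconn.subset_of_closure_inter_subset hUopen ⟨x, hxa, hxU⟩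
    (fun y hy => exists_add_smul_mem_chordSet_of_mem_closure hf hφ hg hb h.right_neg hy.2 hy.1)
    fun hneg => hxa (neg_mem_iff.1 hneg)
  have hneg : Separated f φ (x + (-v) • a) a := by
    have h' := hv.smul_left hf hφ (neg_ne_zero.2 one_ne_zero)
    rwa [show (-1 : ℝ) • (-x + v • a) = x + (-v) • a by module] at h'
  refine hb ?_
  rw [← hv₁, ← (hv.neg_right hf hφ).apply_exitPoint_neg hf hφ hg, neg_neg,
    show -(-x + v • a) = x + (-v) • a by module, h.apply_exitPoint_add_smul hf hφ hg hneg]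

theorem isProjLocConst_apply_exitPoint (hE : 3 ≤ Module.finrank ℝ E) (hf : IsSmoothQuartic f)
    (hφ : IsProjLocConst φ {x | x ≠ 0 ∧ f x ≤ 0}) (hg : IsProjLocConst g {x | x ≠ 0 ∧ f x = 0})
    {d : β → E} (hd : ∀ b, f (d b) < 0 ∧ φ (d b) ≠ b) :
    IsProjLocConst (fun x => g (exitPoint f x (d (φ x)))) {x | f x < 0} := by
  have hsep : ∀ x, f x < 0 → Separated f φ x (d (φ x)) := fun x hx =>
    ⟨hx, (hd (φ x)).1, (hd (φ x)).2.symm⟩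
  refine ⟨fun x hx => ContinuousAt.continuousWithinAt ?_, fun x hx c hc => ?_⟩
  · refine tendsto_nhds_of_eventually_eq ?_
    filter_upwards [(hφ.mono fun _ => hf.mem_nonpos_of_neg).eventually_eq
      (hf.isOpen_neg.mem_nhds hx), (hsep x hx).eventually_apply_exitPoint_eq hf hφ hg]
      with y hφy hgy
    rw [hφy, hgy]
  · rw [hφ.map_smul x (hf.mem_nonpos_of_neg hx) c hc]
    rcases hc.lt_or_gt with hneg | hpos
    · have hsep' := (hsep x hx).smul_left hf hφ (neg_ne_zero.2 hc)
      have hflip := (hsep'.neg_right hf hφ).apply_exitPoint_neg hf hφ hg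
      rw [neg_smul, neg_neg, neg_neg] at hflip
      rw [hflip, ← neg_smul, hsep'.apply_exitPoint_neg_right hE hf hφ hg,
        (hsep x hx).apply_exitPoint_smul hf hφ hg (neg_pos.2 hneg)]
    · exact (hsep x hx).apply_exitPoint_smul hf hφ hg hpos

theorem exists_separated_exitPoint_eq (hf : IsSmoothQuartic f)
    (hφ : IsProjLocConst φ {x | x ≠ 0 ∧ f x ≤ 0}) {z : E} (hz : z ≠ 0) (hfz : f z = 0)
    (ha : f a < 0) (hφa : φ z ≠ φ a) (hderiv : 0 < fderiv ℝ f z a) :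
    ∃ x, Separated f φ x a ∧ φ x = φ z ∧ exitPoint f x a = z := by
  have hpair : Tendsto (fun t : ℝ => (z, t)) (𝓝[≥] 0) (𝓝 (z, 0)) :=
    ((Continuous.prodMk_right z).tendsto 0).mono_left nhdsWithin_le_nhds
  have hne : ∀ᶠ t : ℝ in 𝓝[≥] 0, z + t • -a ≠ 0 :=
    ((by fun_prop : Continuous fun t : ℝ => z + t • -a).continuousAt.eventually_ne
      (by simpa using hz)).filter_mono nhdsWithin_le_nhds
  obtain ⟨ε, hε, hnear⟩ := mem_nhdsGE_iff_exists_Icc_subset.1 (hne.and (hpair.eventually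
    (eventually_lt_of_hasStrictFDerivAt (hf.hasStrictFDerivAt z) (v := -a) (by simpa))))
  have hneg : ∀ t, 0 < t → t ≤ ε → f (z + t • -a) < 0 := fun t ht hle =>
    ((hnear ⟨ht.le, hle⟩).2 ht).trans_eq hfz
  have hpath : MapsTo (fun t : ℝ => z + t • -a) (Icc 0 ε) {x | x ≠ 0 ∧ f x ≤ 0} := by
    refine fun t ht => ⟨(hnear ht).1, ?_⟩
    rcases ht.1.eq_or_lt with rfl | hpos
    · simpa using hfz.le
    · exact (hneg t hpos ht.2).le
  have hφz : φ (z + ε • -a) = φ z := by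
    simpa using isPreconnected_Icc.constant (hφ.continuousOn.comp (by fun_prop) hpath)
      (right_mem_Icc.2 hε.le) (left_mem_Icc.2 hε.le)
  have hhit : firstHit (fun t => f (z + ε • -a + t • a)) = ε := by
    refine firstHit_eq hε.le (fun t ht hlt => ?_) ?_
    · rw [show z + ε • -a + t • a = z + (ε - t) • -a by module]
      exact hneg _ (sub_pos.2 hlt) (sub_le_self ε ht)
    · rw [smul_neg, neg_add_cancel_right, hfz]
  refine ⟨z + ε • -a, ⟨hneg ε hε le_rfl, ha, hφz ▸ hφa⟩, hφz, ?_⟩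
  rw [exitPoint, hhit, smul_neg, neg_add_cancel_right]

theorem exists_mem_ball_fderiv_ne_zero (hf : IsSmoothQuartic f) {z : E} (hz : z ≠ 0)
    (hfz : f z = 0) {r : ℝ} (hr : 0 < r) : ∃ b ∈ Metric.ball a r, fderiv ℝ f z b ≠ 0 := by
  by_contra! hcon
  refine hf.fderiv_ne_zero z hz hfz ?_
  have hker : (fderiv ℝ f z).ker = ⊤ := Submodule.eq_top_of_nonempty_interior' _
    ⟨a, mem_interior_iff_mem_nhds.2 (Filter.mem_of_superset (Metric.ball_mem_nhds a hr) hcon)⟩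
  exact ContinuousLinearMap.coe_injective (LinearMap.ker_eq_top.1 hker)

theorem exists_apply_exitPoint_eq (hE : 3 ≤ Module.finrank ℝ E) (hf : IsSmoothQuartic f)
    (hφ : IsProjLocConst φ {x | x ≠ 0 ∧ f x ≤ 0}) (hg : IsProjLocConst g {x | x ≠ 0 ∧ f x = 0})
    {z : E} (hz : z ≠ 0) (hfz : f z = 0) (ha : f a < 0) (hφa : φ z ≠ φ a) :
    ∃ x, f x < 0 ∧ φ x = φ z ∧ g (exitPoint f x a) = g z := by
  have hnhds : ∀ᶠ y in 𝓝 a, f y < 0 := hf.isOpen_neg.mem_nhds ha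
  obtain ⟨r, hr, hball⟩ := Metric.eventually_nhds_iff_ball.1
    (hnhds.and ((hφ.mono fun _ => hf.mem_nonpos_of_neg).eventually_eq hnhds))
  obtain ⟨b, hb, hderiv⟩ := exists_mem_ball_fderiv_ne_zero hf hz hfz hr (a := a)
  obtain ⟨hfb, hφb⟩ := hball b hb
  obtain ⟨x, hx, hφx, hxz⟩ : ∃ x, Separated f φ x b ∧ φ x = φ z ∧ g (exitPoint f x b) = g z := by
    rcases hderiv.lt_or_gt with hneg | hpos
    · obtain ⟨x, hx, hφx, hxz⟩ := exists_separated_exitPoint_eq hf hφ hz hfz (a := -b)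
        (by rwa [hf.map_neg]) (by rwa [hφ.map_neg (hf.mem_nonpos_of_neg hfb), hφb]) (by simpa)
      have hx' := hx.neg_right hf hφ
      rw [neg_neg] at hx'
      exact ⟨x, hx', hφx, by rw [← hx'.apply_exitPoint_neg_right hE hf hφ hg, hxz]⟩
    · obtain ⟨x, hx, hφx, hxz⟩ := exists_separated_exitPoint_eq hf hφ hz hfz hfb (by rwa [hφb]) hpos
      exact ⟨x, hx, hφx, by rw [hxz]⟩
  refine ⟨x, hx.left_neg, hφx, ?_⟩
  rw [Separated.apply_exitPoint_eq_of_segment hf hφ hg (y := x) (b := b), hxz]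
  rw [segment_same]
  rintro _ rfl c hc
  obtain ⟨hfc, hφc⟩ := hball c ((convex_ball a r).segment_subset (Metric.mem_ball_self hr) hb hc)
  exact ⟨hx.left_neg, hfc, by rwa [hφx, hφc]⟩

theorem exists_isProjLocConst_image_subset (hE : 3 ≤ Module.finrank ℝ E) (hf : IsSmoothQuartic f)
    (hdisc : ¬IsProjPreconnected {x | x ≠ 0 ∧ f x ≤ 0})
    (hg : IsProjLocConst g {x | x ≠ 0 ∧ f x = 0}) :
    ∃ h : E → α, IsProjLocConst h {x | f x < 0} ∧
      g '' {x | x ≠ 0 ∧ f x = 0} ⊆ h '' {x | f x < 0} := by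
  simp only [IsProjPreconnected, not_forall] at hdisc
  obtain ⟨φ, hφ, x, hx, y, hy, hxy⟩ := hdisc
  have hd (b : Bool) : ∃ d, f d < 0 ∧ φ d ≠ b := by
    obtain ⟨x', hx', hφx⟩ := hf.exists_neg_apply_eq hφ.continuousOn hx
    obtain ⟨y', hy', hφy⟩ := hf.exists_neg_apply_eq hφ.continuousOn hy
    by_cases hb : φ x = b
    · exact ⟨y', hy', fun h => hxy (by rw [hb, ← h, hφy])⟩
    · exact ⟨x', hx', fun h => hb (hφx ▸ h)⟩
  choose d hd using hd
  refine ⟨_, isProjLocConst_apply_exitPoint hE hf hφ hg hd, ?_⟩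
  rintro _ ⟨z, ⟨hz, hfz⟩, rfl⟩
  obtain ⟨x, hfx, hφx, hgx⟩ := exists_apply_exitPoint_eq hE hf hφ hg hz hfz (hd (φ z)).1
    (hd (φ z)).2.symm
  exact ⟨x, hfx, by simpa only [hφx] using hgx⟩

end SeparatedPairs

section RealProjectiveSpace

variable {n : ℕ} {α : Type*} [TopologicalSpace α]

/-- The image in projective space of the nonzero vectors satisfying `p`. -/
def projLocus (n : ℕ) (p : (Fin n → ℝ) → Prop) : Set (RP n) :=
  {x | ∃ P : {v : Fin n → ℝ // v ≠ 0}, Quot.mk (projRel n) P = x ∧ p P}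

theorem exists_isProjLocConst_of_continuous [Nonempty α] {S : Set (RP n)} {φ : S → α}
    (hφ : Continuous φ) :
    ∃ g : (Fin n → ℝ) → α, IsProjLocConst g {v | ∃ hv : v ≠ 0, Quot.mk (projRel n) ⟨v, hv⟩ ∈ S} ∧
      ∀ (P : {v : Fin n → ℝ // v ≠ 0}) (hP : Quot.mk (projRel n) P ∈ S), g P = φ ⟨_, hP⟩ := by
  classical
  let g (v : Fin n → ℝ) : α :=
    if h : ∃ hv : v ≠ 0, Quot.mk (projRel n) ⟨v, hv⟩ ∈ S then φ ⟨_, h.2⟩ else Classical.arbitrary α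
  have hg : ∀ (P : {v : Fin n → ℝ // v ≠ 0}) (hP : Quot.mk (projRel n) P ∈ S), g P = φ ⟨_, hP⟩ :=
    fun P hP => dif_pos ⟨P.2, hP⟩
  refine ⟨g, ⟨?_, ?_⟩, hg⟩
  · rw [continuousOn_iff_continuous_domRestrict]
    have hmk : Continuous (Quot.mk (projRel n)) := continuous_quot_mk
    exact (hφ.comp ((hmk.comp (continuous_subtype_val.subtype_mk fun v => v.2.1)).subtype_mk
      fun v => v.2.2)).congr fun v => (hg ⟨v, v.2.1⟩ v.2.2).symm
  · rintro v ⟨hv, hvS⟩ c hc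
    have hmk : Quot.mk (projRel n) ⟨c • v, smul_ne_zero hc hv⟩ = Quot.mk (projRel n) ⟨v, hv⟩ :=
      (Quot.sound ⟨c, hc, rfl⟩).symm
    refine (hg ⟨c • v, smul_ne_zero hc hv⟩ (hmk ▸ hvS)).trans (Eq.trans ?_ (hg ⟨v, hv⟩ hvS).symm)
    exact congrArg φ (Subtype.ext hmk)

theorem isPreconnected_projLocus {p : (Fin n → ℝ) → Prop}
    (h : IsProjPreconnected {x | x ≠ 0 ∧ p x}) : IsPreconnected (projLocus n p) := by
  rw [isPreconnected_iff_preconnectedSpace]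
  refine preconnectedSpace_of_forall_constant fun φ hφ => ?_
  rintro ⟨_, P, rfl, hP⟩ ⟨_, P', rfl, hP'⟩
  obtain ⟨g, hg, hgφ⟩ := exists_isProjLocConst_of_continuous hφ
  have hgP : g P = g P' := h g (hg.mono fun v hv => ⟨hv.1, ⟨v, hv.1⟩, rfl, hv.2⟩)
    P ⟨P.2, hP⟩ P' ⟨P'.2, hP'⟩
  exact (hgφ P _).symm.trans (hgP.trans (hgφ P' _))

theorem exists_isProjLocConst_connectedComponents (p : (Fin n → ℝ) → Prop)
    [Nonempty (ConnectedComponents (projLocus n p))] :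
    ∃ g : (Fin n → ℝ) → ConnectedComponents (projLocus n p),
      IsProjLocConst g {x | x ≠ 0 ∧ p x} ∧ g '' {x | x ≠ 0 ∧ p x} = univ := by
  obtain ⟨g, hg, hgmk⟩ := exists_isProjLocConst_of_continuous
    (ConnectedComponents.continuous_coe (α := projLocus n p))
  refine ⟨g, hg.mono fun v hv => ⟨hv.1, ⟨v, hv.1⟩, rfl, hv.2⟩, eq_univ_of_forall fun C => ?_⟩
  obtain ⟨⟨_, P, rfl, hP⟩, rfl⟩ := ConnectedComponents.surjective_coe C
  exact ⟨P, ⟨P.2, hP⟩, hgmk P _⟩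

end RealProjectiveSpace

theorem isProjPreconnected_nonpos_of_finrank_lt_card {E α : Type*} [NormedAddCommGroup E]
    [NormedSpace ℝ E] [FiniteDimensional ℝ E] [TopologicalSpace α] [DiscreteTopology α]
    (hE : 3 ≤ Module.finrank ℝ E) {Q₁ Q₂ Q₃ : QuadraticForm ℝ E}
    (hf : IsSmoothQuartic (discriminantForm Q₁ Q₂ Q₃)) {g : E → α}
    (hg : IsProjLocConst g {x | x ≠ 0 ∧ discriminantForm Q₁ Q₂ Q₃ x = 0})
    (hcard : Module.finrank ℝ E < (g '' {x | x ≠ 0 ∧ discriminantForm Q₁ Q₂ Q₃ x = 0}).encard) :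
    IsProjPreconnected {x | x ≠ 0 ∧ discriminantForm Q₁ Q₂ Q₃ x ≤ 0} := by
  by_contra hdisc
  obtain ⟨t, ht, hani⟩ : ∃ t ≠ 0, (pencil Q₁ Q₂ Q₃ t).Anisotropic := by
    by_contra! hiso
    exact hdisc (isProjPreconnected_discriminantForm_nonpos hE hiso)
  obtain ⟨h, hh, hgh⟩ := exists_isProjLocConst_image_subset hE hf hdisc hg
  exact (hcard.trans_le (encard_le_encard hgh)).not_ge
    (encard_image_le_finrank_of_anisotropic (by lia) ht hani hf hh)

theorem four_ovals_outside_is_negative_locus_general {n : ℕ} (hn : 3 ≤ n)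
    (Q₁ Q₂ Q₃ : QuadraticForm ℝ (Fin n → ℝ))
    (hsm : ∀ P ≠ 0, discriminantForm Q₁ Q₂ Q₃ P = 0 →
      fderiv ℝ (discriminantForm Q₁ Q₂ Q₃) P ≠ 0)
    (hZ : n < Nat.card (ConnectedComponents
      (projLocus n fun P => discriminantForm Q₁ Q₂ Q₃ P = 0))) :
    IsConnected (projLocus n fun P => discriminantForm Q₁ Q₂ Q₃ P < 0) ∧
      IsConnected (projLocus n fun P => discriminantForm Q₁ Q₂ Q₃ P ≤ 0) := by
  set f := discriminantForm Q₁ Q₂ Q₃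
  have hf : IsSmoothQuartic f := isSmoothQuartic_discriminantForm hsm
  have : Finite (ConnectedComponents (projLocus n fun P => f P = 0)) :=
    Nat.finite_of_card_ne_zero (by lia)
  have : Nonempty (ConnectedComponents (projLocus n fun P => f P = 0)) :=
    (Nat.card_pos_iff.1 (by lia)).1
  obtain ⟨g, hg, hsurj⟩ := exists_isProjLocConst_connectedComponents fun P => f P = 0
  obtain ⟨_, z, hz, -⟩ : (g '' {x | x ≠ 0 ∧ f x = 0}).Nonempty := hsurj ▸ univ_nonempty
  obtain ⟨x, hx : f x < 0⟩ : {x | f x < 0}.Nonempty :=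
    closure_nonempty_iff.1 ⟨z, hf.subset_closure_neg ⟨hz.1, hz.2.le⟩⟩
  have hcard : Module.finrank ℝ (Fin n → ℝ) < (g '' {x | x ≠ 0 ∧ f x = 0}).encard := by
    rw [hsurj, encard_univ, ENat.card_eq_coe_natCard, Module.finrank_fin_fun]
    exact_mod_cast hZ
  have hnonpos := isProjPreconnected_nonpos_of_finrank_lt_card (by simpa using hn) hf hg hcard
  have hneg : {x | x ≠ 0 ∧ f x < 0} = {x | f x < 0} :=
    Set.ext fun _ => and_iff_right_of_imp hf.ne_zero_of_neg
  exact ⟨⟨⟨_, ⟨x, hf.ne_zero_of_neg hx⟩, rfl, hx⟩,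
      isPreconnected_projLocus (hneg ▸ hf.isProjPreconnected_neg hnonpos)⟩,
    ⟨⟨_, ⟨x, hf.ne_zero_of_neg hx⟩, rfl, hx.le⟩, isPreconnected_projLocus hnonpos⟩⟩

open Matrix in
/-- If the quartic `Δ = {f = 0}`, `f = Q₁Q₃ − Q₂²`, is smooth at its real points, the binary
sextic `det(t₀²M₁ + 2t₀t₁M₂ + t₁²M₃)` is nonzero and squarefree over `ℂ`, and the real locus
`Z ⊆ ℝP²` of `Δ` has exactly four connected components, then the sets `{f < 0}` and
`{f ≤ 0}` in `ℝP²` are connected (the outside `U_Δ` of the four ovals is exactly the region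
where `Q₁Q₃ − Q₂² < 0`). -/
theorem four_ovals_outside_is_negative_locus
    (M₁ M₂ M₃ : Matrix (Fin 3) (Fin 3) ℝ)
    (hM₁ : M₁.IsSymm) (hM₂ : M₂.IsSymm) (hM₃ : M₃.IsSymm)
    (Q₁ Q₂ Q₃ : (Fin 3 → ℝ) → ℝ)
    (hQ₁ : ∀ v, Q₁ v = v ⬝ᵥ (M₁ *ᵥ v)) (hQ₂ : ∀ v, Q₂ v = v ⬝ᵥ (M₂ *ᵥ v))
    (hQ₃ : ∀ v, Q₃ v = v ⬝ᵥ (M₃ *ᵥ v))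
    (hsm : ∀ P : Fin 3 → ℝ, P ≠ 0 → Q₁ P * Q₃ P - Q₂ P ^ 2 = 0 →
      fderiv ℝ (fun v => Q₁ v * Q₃ v - Q₂ v ^ 2) P ≠ 0)
    (hp : binarySextic M₁ M₂ M₃ ≠ 0) (hsf : Squarefree (binarySextic M₁ M₂ M₃))
    (Z : Set (RP 3))
    (hZ : Z = {x | ∃ P : {v : Fin 3 → ℝ // v ≠ 0}, Quot.mk (projRel 3) P = x ∧
      Q₁ (P : Fin 3 → ℝ) * Q₃ (P : Fin 3 → ℝ) - Q₂ (P : Fin 3 → ℝ) ^ 2 = 0})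
    (hZ4 : Nonempty (ConnectedComponents ↥Z ≃ Fin 4)) :
    IsConnected {x : RP 3 | ∃ P : {v : Fin 3 → ℝ // v ≠ 0}, Quot.mk (projRel 3) P = x ∧
      Q₁ (P : Fin 3 → ℝ) * Q₃ (P : Fin 3 → ℝ) - Q₂ (P : Fin 3 → ℝ) ^ 2 < 0} ∧
    IsConnected {x : RP 3 | ∃ P : {v : Fin 3 → ℝ // v ≠ 0}, Quot.mk (projRel 3) P = x ∧
      Q₁ (P : Fin 3 → ℝ) * Q₃ (P : Fin 3 → ℝ) - Q₂ (P : Fin 3 → ℝ) ^ 2 ≤ 0} := by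
  have hQ (M : Matrix (Fin 3) (Fin 3) ℝ) (v : Fin 3 → ℝ) : M.toQuadraticForm' v = v ⬝ᵥ (M *ᵥ v) :=
    Matrix.toLinearMap₂'_apply' M v v
  obtain rfl : Q₁ = M₁.toQuadraticForm' := funext fun v => (hQ₁ v).trans (hQ M₁ v).symm
  obtain rfl : Q₂ = M₂.toQuadraticForm' := funext fun v => (hQ₂ v).trans (hQ M₂ v).symm
  obtain rfl : Q₃ = M₃.toQuadraticForm' := funext fun v => (hQ₃ v).trans (hQ M₃ v).symm
  subst hZ
  refine four_ovals_outside_is_negative_locus_general le_rfl _ _ _ hsm ?_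
  exact (Nat.card_eq_of_equiv_fin hZ4.some).symm ▸ Nat.lt_succ_self 3
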